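/- Assume the Continuum Hypothesis. Every productively Lindelöf topological space that has a point-𝔠 base is powerfully Lindelöf. -/

import Mathlib

open Set Cardinal Topology

universe u v

/-- A space is quasi-Lindelöf if every open cover has a countable subcover
(no separation axioms assumed). -/
def QuasiLindelofSp (X : Type u) [TopologicalSpace X] : Prop :=
  ∀ 𝒰 : Set (Set X), (∀ U ∈ 𝒰, IsOpen U) → ⋃₀ 𝒰 = Set.univ →
    ∃ 𝒱 ⊆ 𝒰, 𝒱.Countable ∧ ⋃₀ 𝒱 = Set.univ

/-- Lindelöf in the sense of Engelking: regular (T3, including T1) and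
every open cover has a countable subcover. -/
def EngLindelofSp (X : Type u) [TopologicalSpace X] : Prop :=
  RegularSpace X ∧ T1Space X ∧ QuasiLindelofSp X

/-- X is productively Lindelöf if X × Y is Lindelöf for every Lindelöf space Y. -/
def ProductivelyLindelofSp (X : Type u) [TopologicalSpace X] : Prop :=
  ∀ (Y : Type u) [TopologicalSpace Y], EngLindelofSp Y → EngLindelofSp (X × Y)

/-- X is productively quasi-Lindelöf if X × Y is quasi-Lindelöf for every Lindelöf space Y. -/
def ProductivelyQuasiLindelofSp (X : Type u) [TopologicalSpace X] : Prop :=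
  ∀ (Y : Type u) [TopologicalSpace Y], EngLindelofSp Y → QuasiLindelofSp (X × Y)

/-- X is powerfully Lindelöf if X^ω is Lindelöf. -/
def PowerfullyLindelofSp (X : Type u) [TopologicalSpace X] : Prop :=
  EngLindelofSp (ℕ → X)

/-- X is powerfully quasi-Lindelöf if X^ω is quasi-Lindelöf. -/
def PowerfullyQuasiLindelofSp (X : Type u) [TopologicalSpace X] : Prop :=
  QuasiLindelofSp (ℕ → X)

/-- Tightness of X is at most κ. -/
def TightnessLE (X : Type u) [TopologicalSpace X] (κ : Cardinal.{u}) : Prop :=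
  ∀ (A : Set X) (x : X), x ∈ closure A → ∃ B ⊆ A, #B ≤ κ ∧ x ∈ closure B

/-- X has countable tightness. -/
def CountableTightness (X : Type u) [TopologicalSpace X] : Prop :=
  ∀ (A : Set X) (x : X), x ∈ closure A → ∃ B ⊆ A, B.Countable ∧ x ∈ closure B

/-- The Lindelöf number of X is at most κ: every open cover has a subcover of size ≤ κ. -/
def LindelofNumberLE (X : Type u) [TopologicalSpace X] (κ : Cardinal.{u}) : Prop :=
  ∀ 𝒰 : Set (Set X), (∀ U ∈ 𝒰, IsOpen U) → ⋃₀ 𝒰 = Set.univ →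
    ∃ 𝒱 ⊆ 𝒰, #𝒱 ≤ κ ∧ ⋃₀ 𝒱 = Set.univ

/-- The weight of X is at most κ: there is a base of size ≤ κ. -/
def WeightLE (X : Type u) [TopologicalSpace X] (κ : Cardinal.{u}) : Prop :=
  ∃ B : Set (Set X), TopologicalSpace.IsTopologicalBasis B ∧ #B ≤ κ

/-- N is a network for X. -/
def IsNetwork (X : Type u) [TopologicalSpace X] (N : Set (Set X)) : Prop :=
  ∀ (x : X) (U : Set X), IsOpen U → x ∈ U → ∃ n ∈ N, x ∈ n ∧ n ⊆ U

/-- X is linearly Lindelöf: regular (incl. T1) and every open cover linearly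
ordered by inclusion has a countable subcover. -/
def LinearlyLindelofSp (X : Type u) [TopologicalSpace X] : Prop :=
  RegularSpace X ∧ T1Space X ∧
    ∀ 𝒰 : Set (Set X), (∀ U ∈ 𝒰, IsOpen U) → IsChain (· ⊆ ·) 𝒰 → ⋃₀ 𝒰 = Set.univ →
      ∃ 𝒱 ⊆ 𝒰, 𝒱.Countable ∧ ⋃₀ 𝒱 = Set.univ

/-- U ⊆ X^ω is a basic open set: a product of open sets, all but finitely many of
which equal X. -/
def IsBasicOpen (X : Type u) [TopologicalSpace X] (U : Set (ℕ → X)) : Prop :=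
  ∃ V : ℕ → Set X, (∀ i, IsOpen (V i)) ∧ {i | V i ≠ Set.univ}.Finite ∧
    U = Set.pi Set.univ V

/-- A family of subsets of Z is point-κ if every point belongs to at most κ members. -/
def PointLE {Z : Type u} (𝒲 : Set (Set Z)) (κ : Cardinal.{u}) : Prop :=
  ∀ z : Z, #({W ∈ 𝒲 | z ∈ W}) ≤ κ

/-- A non-empty space is zero-dimensional if it is T1 and has a base of clopen sets. -/
def ZeroDimensionalSp (Y : Type u) [TopologicalSpace Y] : Prop :=
  Nonempty Y ∧ T1Space Y ∧
    ∃ B : Set (Set Y), TopologicalSpace.IsTopologicalBasis B ∧ ∀ b ∈ B, IsClopen b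


theorem quasi_iff (X : Type u) [TopologicalSpace X] :
    QuasiLindelofSp X ↔ LindelofSpace X := by
  constructor
  · intro h
    rw [← isLindelof_univ_iff, isLindelof_iff_countable_subcover]
    intro ι U hU hc
    obtain ⟨V, hV, hVc, hVu⟩ := h (range U) (by rintro _ ⟨i, rfl⟩; exact hU i)
      (by rw [sUnion_range]; exact univ_subset_iff.1 hc)
    choose f hf using hV
    have : Countable V := hVc
    refine ⟨range (fun v : V => f v.2), countable_range _, ?_⟩
    intro x _
    have : x ∈ ⋃₀ V := by rw [hVu]; trivial
    obtain ⟨v, hv, hx⟩ := this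
    refine mem_biUnion (mem_range_self (⟨v, hv⟩ : V)) ?_
    simp only [hf]; exact hx
  · intro h U hU hc
    obtain ⟨r, hr, hrc⟩ := isLindelof_univ.elim_countable_subcover (X := X) (fun i : U => (i : Set X))
      (fun i => hU i i.2) (by rw [← sUnion_eq_iUnion, hc])
    refine ⟨Subtype.val '' r, by rintro _ ⟨x, _, rfl⟩; exact x.2, hr.image _, ?_⟩
    rw [sUnion_image]
    exact univ_subset_iff.1 hrc

/-- countable subfamily extraction -/
theorem lind_sub {X : Type*} [TopologicalSpace X] {s : Set X} (hs : IsLindelof s)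
    (𝒰 : Set (Set X)) (ho : ∀ U ∈ 𝒰, IsOpen U) (hc : s ⊆ ⋃₀ 𝒰) :
    ∃ 𝒱 ⊆ 𝒰, 𝒱.Countable ∧ s ⊆ ⋃₀ 𝒱 := by
  obtain ⟨r, hr, hrc⟩ := hs.elim_countable_subcover (fun i : 𝒰 => (i : Set X))
      (fun i => ho i i.2) (by rw [← sUnion_eq_iUnion]; exact hc)
  refine ⟨Subtype.val '' r, by rintro _ ⟨x, _, rfl⟩; exact x.2, hr.image _, ?_⟩
  rw [sUnion_image]
  exact hrc

theorem eng_of {X : Type u} [TopologicalSpace X] (h : EngLindelofSp X) :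
    T3Space X ∧ LindelofSpace X := by
  obtain ⟨h1, h2, h3⟩ := h
  exact ⟨{}, (quasi_iff X).1 h3⟩

theorem eng_mk {X : Type u} [TopologicalSpace X] [T3Space X] (h : LindelofSpace X) :
    EngLindelofSp X := ⟨inferInstance, inferInstance, (quasi_iff X).2 h⟩

theorem pl_self {X : Type u} [TopologicalSpace X] (h : ProductivelyLindelofSp X) :
    T3Space X ∧ LindelofSpace X := by
  obtain ⟨h1, h2⟩ := eng_of (h PUnit (eng_mk inferInstance))
  let e := Homeomorph.prodPUnit X
  exact ⟨e.symm.isEmbedding.t3Space, LindelofSpace.of_continuous_surjective e.continuous e.surjective⟩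

theorem pl_prod {X Y : Type u} [TopologicalSpace X] [TopologicalSpace Y]
    (h : ProductivelyLindelofSp X) [T3Space Y] (hY : LindelofSpace Y) :
    LindelofSpace (X × Y) := (eng_of (h Y (eng_mk hY))).2

/-- transfer of productive Lindelofness from products -/
theorem pl_mk {X : Type u} [TopologicalSpace X] [T3Space X]
    (h : ∀ (Y : Type u) [TopologicalSpace Y] [T3Space Y] [LindelofSpace Y],
      LindelofSpace (X × Y)) : ProductivelyLindelofSp X := by
  intro Y _ hY
  obtain ⟨h1, h2⟩ := eng_of hY
  exact eng_mk (h Y)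

theorem pl_closed {X : Type u} [TopologicalSpace X] (h : ProductivelyLindelofSp X)
    (Z : Set X) (hZ : IsClosed Z) : ProductivelyLindelofSp Z := by
  have := (pl_self h).1
  apply pl_mk
  intro Y _ _ hY
  have h1 := pl_prod h hY
  let f : Z × Y → X × Y := Prod.map Subtype.val id
  have hf : IsClosedEmbedding f := (hZ.isClosedEmbedding_subtypeVal).prodMap .id
  exact hf.LindelofSpace

theorem compact_prod_lind {K Y : Type*} [TopologicalSpace K] [TopologicalSpace Y]
    [CompactSpace K] [LindelofSpace Y] : LindelofSpace (K × Y) := by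
  rw [← isLindelof_univ_iff, isLindelof_iff_countable_subcover]
  intro ι U hU hc
  have h1 : ∀ y : Y, ∃ t : Finset ι, ∃ V : Set Y, IsOpen V ∧ y ∈ V ∧
      (univ : Set K) ×ˢ V ⊆ ⋃ i ∈ t, U i := by
    intro y
    have hk : IsCompact ((univ : Set K) ×ˢ ({y} : Set Y)) := isCompact_univ.prod isCompact_singleton
    obtain ⟨t, ht⟩ := hk.elim_finite_subcover U hU ((subset_univ _).trans hc)
    obtain ⟨A, V, hA, hV, h1, h2, h3⟩ := generalized_tube_lemma (isCompact_univ (X := K))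
      (isCompact_singleton (x := y)) (isOpen_biUnion fun i _ => hU i) ht
    exact ⟨t, V, hV, h2 rfl, (prod_mono h1 le_rfl).trans h3⟩
  choose t V hV hy hs using h1
  obtain ⟨r, hr, hrc⟩ := isLindelof_univ.elim_countable_subcover V hV
    (fun y _ => mem_iUnion.2 ⟨y, hy y⟩)
  refine ⟨⋃ y ∈ r, (t y : Set ι), hr.biUnion fun y _ => (t y).countable_toSet, ?_⟩
  rintro ⟨k, y⟩ _
  obtain ⟨y', hy', h2⟩ := mem_iUnion₂.1 (hrc (mem_univ y))
  obtain ⟨i, hi, h3⟩ := mem_iUnion₂.1 (hs y' (show (k, y) ∈ (univ : Set K) ×ˢ V y' from ⟨trivial, h2⟩))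
  exact mem_iUnion₂.2 ⟨i, mem_biUnion hy' hi, h3⟩

theorem machine {I X E : Type u} [TopologicalSpace X] [TopologicalSpace E] [T3Space E]
    (hX : ProductivelyLindelofSp X) [Uncountable I] (Z : Set E) (x : I → X) (a : I → E)
    (H : ∀ 𝒰 : Set (Set E), (∀ U ∈ 𝒰, IsOpen U) → Z ⊆ ⋃₀ 𝒰 →
      ∃ 𝒱 ⊆ 𝒰, 𝒱.Countable ∧ Z ⊆ ⋃₀ 𝒱 ∧ {i | a i ∉ ⋃₀ 𝒱}.Countable)
    (hd : ∀ x0 : X, ∀ z ∈ Z, ∃ O : Set X, ∃ V : Set E, IsOpen O ∧ IsOpen V ∧ x0 ∈ O ∧ z ∈ V ∧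
      ∀ i, x i ∈ O → a i ∉ V) : False := by
  classical
  let d : I → I → Bool := fun i j => decide (i = j)
  let Yset : Set (E × (I → Bool)) :=
    {p | (p.1 ∈ Z ∧ p.2 = fun _ => false) ∨ ∃ i, p = (a i, d i)}
  have hfin : ∀ V : Set (I → Bool), IsOpen V → (fun _ => false) ∈ V → {i | d i ∉ V}.Finite := by
    intro V hV h0
    rw [isOpen_pi_iff] at hV
    obtain ⟨F, u, hu, hs⟩ := hV _ h0
    refine (F.finite_toSet).subset ?_
    intro i hi
    by_contra hiF
    apply hi
    apply hs
    intro j hj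
    have : d i j = false := by
      simp only [d, decide_eq_false_iff_not]
      rintro rfl; exact hiF hj
    rw [this]; exact (hu j hj).2
  have hL : LindelofSpace Yset := by
    rw [← isLindelof_univ_iff, Subtype.isLindelof_iff, image_univ, Subtype.range_coe,
      isLindelof_iff_countable_subcover]
    intro ι U hU hc
    have h1 : ∀ z : Z, ∃ k : ι, ∃ A : Set E, ∃ B : Set (I → Bool), IsOpen A ∧ IsOpen B ∧ z.1 ∈ A ∧
       (fun _ => false) ∈ B ∧ A ×ˢ B ⊆ U k := by
      intro z
      obtain ⟨k, hk⟩ := mem_iUnion.1 (hc (Or.inl ⟨z.2, rfl⟩ : ((z.1, fun _ => false) ∈ Yset)))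
      obtain ⟨A, B, hA, hB, h1, h2, h3⟩ := isOpen_prod_iff.1 (hU k) _ _ hk
      exact ⟨k, A, B, hA, hB, h1, h2, h3⟩
    choose k A B hA hB hzA hzB hAB using h1
    obtain ⟨𝒱, hV, hVc, hZV, hic⟩ := H (range A) (by rintro _ ⟨z, rfl⟩; exact hA z)
      (fun z hz => ⟨A ⟨z, hz⟩, mem_range_self _, hzA _⟩)
    choose f hf using hV
    have hVc' : Countable 𝒱 := hVc
    have h2 : ∀ i, ∃ k, (a i, d i) ∈ U k := fun i => mem_iUnion.1 (hc (Or.inr ⟨i, rfl⟩))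
    choose q hq using h2
    let bad : Set I := {i | a i ∉ ⋃₀ 𝒱} ∪ ⋃ v : 𝒱, {i | d i ∉ B (f v.2)}
    have hbad : bad.Countable := hic.union (countable_iUnion fun v => (hfin _ (hB _) (hzB _)).countable)
    refine ⟨(range fun v : 𝒱 => k (f v.2)) ∪ q '' bad, (countable_range _).union (hbad.image _), ?_⟩
    rintro p (⟨hp, hp0⟩ | ⟨i, rfl⟩)
    · obtain ⟨v, hv, hpv⟩ := hZV hp
      refine mem_biUnion (Or.inl (mem_range_self (⟨v, hv⟩ : 𝒱))) (hAB _ ⟨?_, ?_⟩)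
      · simp only [hf]; exact hpv
      · rw [hp0]; exact hzB _
    · by_cases hb : i ∈ bad
      · exact mem_biUnion (Or.inr ⟨i, hb, rfl⟩) (hq i)
      · simp only [bad, mem_union, mem_ofPred_eq, not_or, not_not, mem_iUnion, not_exists] at hb
        obtain ⟨⟨v, hv, hpv⟩, h3⟩ := hb
        refine mem_biUnion (Or.inl (mem_range_self (⟨v, hv⟩ : 𝒱))) (hAB _ ⟨?_, h3 ⟨v, hv⟩⟩)
        simp only [hf]; exact hpv
  have hP := pl_prod hX hL
  -- the cover
  let pt : I → X × Yset := fun i => (x i, ⟨(a i, d i), Or.inr ⟨i, rfl⟩⟩)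
  let 𝒰 : Set (Set (X × Yset)) := {W | IsOpen W ∧ {i | pt i ∈ W}.Subsingleton}
  have hcov : (univ : Set (X × Yset)) ⊆ ⋃₀ 𝒰 := by
    rintro ⟨x0, ⟨⟨z, c⟩, hy⟩⟩ _
    rcases hy with ⟨hz, hc⟩ | ⟨i, hi⟩
    · obtain ⟨O, V, hO, hV, h1, h2, h3⟩ := hd x0 z hz
      refine ⟨O ×ˢ ((fun y : Yset => y.1.1) ⁻¹' V), ⟨hO.prod (hV.preimage (by fun_prop)), ?_⟩, h1, h2⟩
      intro i hi
      exact absurd hi.2 (h3 i hi.1)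
    · refine ⟨{p : X × Yset | p.2.1.2 i = true}, ⟨?_, ?_⟩, ?_⟩
      · exact (isOpen_discrete {true}).preimage
          (f := fun p : X × Yset => p.2.1.2 i) (by fun_prop)
      · intro j hj k hk
        simp only [pt, d, mem_ofPred_eq, decide_eq_true_eq] at hj hk
        rw [hj, hk]
      · simp only [Prod.mk.injEq] at hi
        simp [hi.2, d]
  obtain ⟨𝒱, hV, hVc, hVu⟩ := lind_sub (isLindelof_univ) 𝒰 (fun U h => h.1) hcov
  have : (univ : Set I).Countable := by
    refine (hVc.biUnion (t := fun W _ => {i | pt i ∈ W}) fun W hW => (hV hW).2.countable).mono ?_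
    intro i _
    obtain ⟨W, hW, h⟩ := hVu (mem_univ (pt i))
    exact mem_biUnion hW h
  exact not_countable_univ this


/-- the index set: a well-order of type omega one of size continuum -/
class OmOne (I : Type u) [LinearOrder I] : Prop where
  wf : WellFoundedLT I
  cnt : ∀ i : I, (Iic i).Countable
  card : #I = Cardinal.continuum.{u}

theorem OmOne.exists (hCH : Cardinal.continuum.{v} = Cardinal.aleph.{v} 1) :
    ∃ (I : Type u) (_ : LinearOrder I), OmOne I := by
  have h : Cardinal.continuum.{u} = Cardinal.aleph.{u} 1 := by
    have := congrArg Cardinal.lift.{u} hCH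
    rw [Cardinal.lift_continuum, Cardinal.lift_aleph, ← Cardinal.lift_continuum.{v, u}] at this
    have h2 : Cardinal.lift.{v} (Cardinal.aleph.{u} 1) = Cardinal.aleph.{max u v} (Ordinal.lift.{u} 1) := by
      rw [Cardinal.lift_aleph]; simp
    rw [← h2] at this
    exact Cardinal.lift_injective this
  refine ⟨(Cardinal.aleph.{u} 1).ord.ToType, inferInstance, inferInstance, ?_, ?_⟩
  · intro i
    have h1 : #(Iio i) < Cardinal.aleph 1 := Cardinal.mk_Iio_toType_ord_lt i
    have h2 : (Iio i).Countable := by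
      rw [← Cardinal.le_aleph0_iff_set_countable]
      exact Order.lt_succ_iff.1 (h1.trans_eq Cardinal.succ_aleph0.symm)
    rw [← Iio_insert]
    exact h2.insert i
  · rw [h]; simp

section
variable {I : Type u} [LinearOrder I] [OmOne I]

theorem OmOne.unc : Uncountable I := by
  rw [← not_countable_iff, ← Cardinal.mk_le_aleph0_iff, OmOne.card, not_le]
  exact Cardinal.aleph0_lt_continuum

theorem OmOne.bdd {S : Set I} (hS : S.Countable) : ∃ γ : I, ∀ s ∈ S, s < γ := by
  by_contra h
  push Not at h
  have : (univ : Set I).Countable := by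
    refine (hS.biUnion (t := fun s _ => Iic s) fun s _ => OmOne.cnt s).mono ?_
    intro i _
    obtain ⟨s, hs, h2⟩ := h i
    exact mem_biUnion hs h2
  have := OmOne.unc (I := I)
  exact not_countable_univ ‹_›

theorem OmOne.cntI (i : I) : (Iio i).Countable := (OmOne.cnt i).mono Iio_subset_Iic_self

theorem OmOne.enum {T : Type u} [Nonempty T] (h : #T ≤ Cardinal.continuum.{u}) :
    ∃ f : I → T, Function.Surjective f := by
  rw [← OmOne.card (I := I)] at h
  obtain ⟨e⟩ := h
  exact ⟨Function.invFun e, Function.invFun_surjective e.injective⟩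

theorem OmOne.club (g : I → I) (δ : I) : ∃ γ, δ < γ ∧ ∀ i < γ, g i < γ := by
  have hs : ∀ d : I, ∃ d' : I, d < d' ∧ ∀ i ≤ d, g i < d' := by
    intro d
    obtain ⟨γ, hγ⟩ := OmOne.bdd (((OmOne.cnt d).image g).insert d)
    exact ⟨γ, hγ d (mem_insert _ _), fun i hi => hγ _ (mem_insert_of_mem _ ⟨i, hi, rfl⟩)⟩
  choose s hs1 hs2 using hs
  let q : ℕ → I := fun n => s^[n] δ
  have hq : ∀ n, q (n+1) = s (q n) := fun n => Function.iterate_succ_apply' s n δ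
  obtain ⟨γ0, h0⟩ := OmOne.bdd (countable_range q)
  have := OmOne.wf (I := I)
  let B : Set I := {γ | ∀ n, q n < γ}
  have hB : B.Nonempty := ⟨γ0, fun n => h0 _ (mem_range_self n)⟩
  let γ := wellFounded_lt.min B hB
  have hγ : γ ∈ B := wellFounded_lt.min_mem B hB
  refine ⟨γ, hγ 0, fun i hi => ?_⟩
  have : i ∉ B := fun h => wellFounded_lt.not_lt_min B h hi
  simp only [B, mem_ofPred_eq, not_forall, not_lt] at this
  obtain ⟨n, hn⟩ := this
  exact (hs2 (q n) i hn).trans (hq n ▸ hγ (n+1))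

theorem OmOne.max_lt (F : Finset I) {δ γ : I} (hδ : δ < γ) (hF : ∀ j ∈ F, j < γ) :
    ∃ i < γ, ∀ j ∈ F, j ≤ i := by
  classical
  refine ⟨(insert δ F).max' (Finset.insert_nonempty _ _), ?_, ?_⟩
  · rw [Finset.max'_lt_iff]
    intro y hy
    rcases Finset.mem_insert.1 hy with rfl | h
    · exact hδ
    · exact hF _ h
  · intro j hj
    exact Finset.le_max' _ _ (Finset.mem_insert_of_mem hj)

theorem OmOne.exists_bd {T : Type*} (supp : T → Finset I)
    (hc : ∀ i, {t | ∀ j ∈ supp t, j ≤ i}.Countable) (h : T → I) :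
    ∃ g : I → I, ∀ t i, (∀ j ∈ supp t, j ≤ i) → h t < g i := by
  have : ∀ i, ∃ d, ∀ t, (∀ j ∈ supp t, j ≤ i) → h t < d := by
    intro i
    obtain ⟨d, hd⟩ := OmOne.bdd ((hc i).image h)
    exact ⟨d, fun t ht => hd _ ⟨t, ht, rfl⟩⟩
  choose g hg using this
  exact ⟨g, fun t i => hg i t⟩
end

theorem countable_finsets {A : Type*} {D : Set A} (hD : D.Countable) :
    {t : Finset A | ∀ a ∈ t, a ∈ D}.Countable := by
  have h := Set.countable_ofPred_finite_subset hD
  refine Set.MapsTo.countable_of_injOn (f := fun t : Finset A => (t : Set A)) (t := _) ?_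
    (Finset.coe_injective.injOn) h
  intro t ht
  exact ⟨t.finite_toSet, fun a ha => ht a ha⟩

section Bas
variable {J S : Type*}

def Bas (F : Finset (J × S)) : Set (J → S) := {f | ∀ p ∈ F, f p.1 = p.2}

def OB (𝒮 : Set (Finset (J × S))) : Set (J → S) := ⋃ F ∈ 𝒮, Bas F

theorem mem_Bas {F : Finset (J × S)} {f : J → S} : f ∈ Bas F ↔ ∀ p ∈ F, f p.1 = p.2 := Iff.rfl

theorem mem_OB {𝒮 : Set (Finset (J × S))} {f : J → S} : f ∈ OB 𝒮 ↔ ∃ F ∈ 𝒮, f ∈ Bas F := by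
  simp [OB]

theorem Bas_union [DecidableEq (J × S)] (F G : Finset (J × S)) : Bas (F ∪ G) = Bas F ∩ Bas G := by
  ext f
  simp only [Bas, mem_ofPred_eq, mem_inter_iff, Finset.mem_union]
  exact ⟨fun h => ⟨fun p hp => h p (.inl hp), fun p hp => h p (.inr hp)⟩,
    fun h p hp => hp.elim (h.1 p) (h.2 p)⟩

theorem OB_supp {𝒮 : Set (Finset (J × S))} {D : Set J} (h : ∀ F ∈ 𝒮, ∀ p ∈ F, p.1 ∈ D)
   {f g : J → S} (hfg : ∀ j ∈ D, f j = g j) (hf : f ∈ OB 𝒮) : g ∈ OB 𝒮 := by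
  rw [mem_OB] at *
  obtain ⟨F, hF, h1⟩ := hf
  exact ⟨F, hF, fun p hp => by rw [← hfg _ (h F hF p hp)]; exact h1 p hp⟩

variable [TopologicalSpace S] [DiscreteTopology S]

theorem isClopen_Bas (F : Finset (J × S)) : IsClopen (Bas F) := by
  have : Bas F = ⋂ p ∈ F, {f | f p.1 = p.2} := by ext; simp [Bas]
  rw [this]
  refine isClopen_biInter_finset fun p _ => ?_
  exact (isClopen_discrete {p.2}).preimage (continuous_apply p.1)

theorem isOpen_OB (𝒮 : Set (Finset (J × S))) : IsOpen (OB 𝒮) :=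
  isOpen_biUnion fun F _ => (isClopen_Bas F).isOpen

theorem exists_Bas {U : Set (J → S)} (hU : IsOpen U) {f : J → S} (hf : f ∈ U) :
    ∃ F, f ∈ Bas F ∧ Bas F ⊆ U := by
  classical
  rw [isOpen_pi_iff] at hU
  obtain ⟨F, u, hu, hs⟩ := hU _ hf
  refine ⟨F.image fun j => (j, f j), ?_, ?_⟩
  · intro p hp
    obtain ⟨j, _, rfl⟩ := Finset.mem_image.1 hp
    rfl
  · intro g hg
    apply hs
    intro j hj
    have := hg (j, f j) (Finset.mem_image_of_mem _ hj)
    rw [show g j = f j from this]; exact (hu j hj).2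

theorem compact_Bas {K U : Set (J → S)} (hK : IsCompact K) (hU : IsOpen U) (hKU : K ⊆ U) :
    ∃ 𝒮 : Finset (Finset (J × S)), K ⊆ OB (𝒮 : Set (Finset (J × S))) ∧ OB (𝒮 : Set (Finset (J × S))) ⊆ U := by
  classical
  have : ∀ f : K, ∃ F, f.1 ∈ Bas F ∧ Bas F ⊆ U := fun f => exists_Bas hU (hKU f.2)
  choose F hF1 hF2 using this
  obtain ⟨t, ht⟩ := hK.elim_finite_subcover (fun f : K => Bas (F f)) (fun f => (isClopen_Bas _).isOpen)
    (fun f hf => mem_iUnion.2 ⟨⟨f, hf⟩, hF1 _⟩)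
  refine ⟨t.image F, ?_, ?_⟩
  · intro f hf
    obtain ⟨k, hk, h⟩ := mem_iUnion₂.1 (ht hf)
    exact mem_OB.2 ⟨F k, by simpa using ⟨_, _, hk, rfl⟩, h⟩
  · intro f hf
    obtain ⟨G, hG, h⟩ := mem_OB.1 hf
    simp only [Finset.coe_image, mem_image] at hG
    obtain ⟨k, _, rfl⟩ := hG
    exact hF2 k h

/-- sets of functions supported on a countable set are Lindelof -/
theorem lind_supp [Countable S] {D : Set J} (hD : D.Countable) (s0 : S) (Z : Set (J → S))
    (hZ : ∀ f ∈ Z, ∀ j ∉ D, f j = s0) : IsLindelof Z := by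
  classical
  have : Countable D := hD
  let r : (D → S) → (J → S) := fun c j => if h : j ∈ D then c ⟨j, h⟩ else s0
  have hr : Continuous r := by
    refine continuous_pi fun j => ?_
    by_cases h : j ∈ D
    · simp only [r, h, dite_true]; fun_prop
    · simp only [r, h, dite_false]; fun_prop
  have : Z = r '' (r ⁻¹' Z) := by
    rw [image_preimage_eq_inter_range, eq_comm, inter_eq_left]
    intro f hf
    refine ⟨fun j => f j, ?_⟩
    ext j
    by_cases h : j ∈ D
    · simp [r, h]
    · simp [r, h, hZ f hf j h]
  rw [this]
  exact (HereditarilyLindelofSpace.isLindelof _).image hr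
end Bas

theorem mk_finset_le {A : Type u} (hA : #A ≤ Cardinal.continuum.{u}) :
    #(Finset A) ≤ Cardinal.continuum.{u} := by
  rcases finite_or_infinite A with h | h
  · exact (Cardinal.mk_le_aleph0 (α := Finset A)).trans Cardinal.aleph0_le_continuum
  · rw [Cardinal.mk_finset_of_infinite]; exact hA

theorem mk_seq_le {A : Type u} (hA : #A ≤ Cardinal.continuum.{u}) :
    #(ℕ → A) ≤ Cardinal.continuum.{u} := by
  rw [Cardinal.mk_arrow, ← Cardinal.continuum_power_aleph0]
  simpa using Cardinal.power_le_power_right (c := Cardinal.aleph0) hA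

theorem OmOne.enumOB {I J : Type u} {S : Type} [LinearOrder I] [OmOne I] [Finite S]
    (hJ : #J ≤ Cardinal.continuum.{u}) :
    ∃ C : I → Set (Finset (J × S)), (∀ β, (C β).Countable) ∧
      ∀ 𝒮 : Set (Finset (J × S)), 𝒮.Countable → ∃ β, C β = 𝒮 := by
  classical
  have h1 : #(J × S) ≤ Cardinal.continuum.{u} := by
    rw [Cardinal.mk_prod, ← Cardinal.continuum_mul_self]
    refine mul_le_mul' (by simpa using hJ) ?_
    refine le_trans ?_ Cardinal.aleph0_le_continuum
    rw [Cardinal.lift_le_aleph0]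
    exact Cardinal.mk_le_aleph0
  have h2 : #(Option (Finset (J × S))) ≤ Cardinal.continuum.{u} := by
    rw [Cardinal.mk_option, ← Cardinal.continuum_add_self]
    exact add_le_add (mk_finset_le h1) (Cardinal.one_le_aleph0.trans Cardinal.aleph0_le_continuum)
  obtain ⟨f, hf⟩ := OmOne.enum (I := I) (mk_seq_le h2)
  refine ⟨fun β => {F | ∃ n, f β n = some F}, fun β => ?_, fun 𝒮 h𝒮 => ?_⟩
  · refine (countable_range fun n => (f β n).getD ∅).mono ?_
    rintro F ⟨n, hn⟩
    exact ⟨n, by simp [hn]⟩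
  · obtain ⟨c, hc⟩ : ∃ c : ℕ → Option (Finset (J × S)), {F | ∃ n, c n = some F} = 𝒮 := by
      rcases 𝒮.eq_empty_or_nonempty with rfl | hne
      · exact ⟨fun _ => none, by ext; simp⟩
      · obtain ⟨g, rfl⟩ := h𝒮.exists_eq_range hne
        exact ⟨fun n => some (g n), by ext; simp⟩
    obtain ⟨β, rfl⟩ := hf c
    exact ⟨β, hc⟩


section
variable {I : Type u} [LinearOrder I]

def prj (γ : I) (f : I → Bool) : I → Bool := fun i => if i < γ then f i else false

theorem prj_cont (γ : I) : Continuous (prj γ) := by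
  refine continuous_pi fun j => ?_
  by_cases h : j < γ
  · simp only [prj, h, if_true]; fun_prop
  · simp only [prj, h, if_false]; fun_prop

theorem prj_eq {γ : I} {f g : I → Bool} : prj γ f = prj γ g ↔ ∀ i < γ, f i = g i := by
  constructor
  · intro h i hi
    have := congrFun h i
    simpa [prj, hi] using this
  · intro h
    ext i
    by_cases hi : i < γ
    · simp [prj, hi, h]
    · simp [prj, hi]

theorem prj_lt {γ i : I} (hi : i < γ) (f : I → Bool) : prj γ f i = f i := by simp [prj, hi]
theorem prj_ge {γ i : I} (hi : ¬ i < γ) (f : I → Bool) : prj γ f i = false := by simp [prj, hi]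

variable [OmOne I]

theorem michael (X : Set (I → Bool)) (hX : ProductivelyLindelofSp X) (γ : I) :
    ∃ 𝓕 : Set (Set (I → Bool)), 𝓕.Countable ∧ (∀ F ∈ 𝓕, IsClosed F) ∧ ⋃₀ 𝓕 = prj γ '' X := by
  by_contra hcon
  obtain ⟨C, hCc, hC⟩ := OmOne.enumOB (I := I) (J := I) (S := Bool) OmOne.card.le
  let Z : Set (I → Bool) := range (prj γ) \ prj γ '' X
  have hr : IsClosed (range (prj γ)) := (isCompact_range (prj_cont γ)).isClosed
  have hx : ∀ α : I, ∃ x : X, ∀ β < α, Z ⊆ OB (C β) → prj γ x ∈ OB (C β) := by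
    intro α
    by_contra h
    push Not at h
    apply hcon
    refine ⟨(fun β => range (prj γ) \ OB (C β)) '' {β | β < α ∧ Z ⊆ OB (C β)}, ?_, ?_, ?_⟩
    · exact ((OmOne.cntI α).mono fun β h => h.1).image _
    · rintro _ ⟨β, _, rfl⟩
      exact hr.sdiff (isOpen_OB _)
    · apply subset_antisymm
      · rintro f ⟨_, ⟨β, hβ, rfl⟩, h1, h2⟩
        by_contra h3
        exact h2 (hβ.2 ⟨h1, h3⟩)
      · rintro _ ⟨x, hx, rfl⟩
        obtain ⟨β, h1, h2, h3⟩ := h ⟨x, hx⟩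
        exact ⟨_, ⟨β, ⟨h1, h2⟩, rfl⟩, mem_range_self _, h3⟩
  choose x hx using hx
  have := OmOne.unc (I := I)
  refine machine (I := I) hX Z x (fun i => prj γ (x i)) ?_ ?_
  · intro 𝒰 hU hc
    have hL : IsLindelof Z := by
      refine lind_supp (OmOne.cntI γ) false Z ?_
      rintro _ ⟨⟨f, rfl⟩, _⟩ j hj
      exact prj_ge hj f
    have h1 : ∀ z : Z, ∃ U ∈ 𝒰, ∃ F, z.1 ∈ Bas F ∧ Bas F ⊆ U := by
      intro z
      obtain ⟨U, hU', hz⟩ := hc z.2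
      exact ⟨U, hU', exists_Bas (hU U hU') hz⟩
    choose U hU1 F hF1 hF2 using h1
    obtain ⟨r, hr, hrc⟩ := hL.elim_countable_subcover (fun z : Z => Bas (F z))
      (fun z => (isClopen_Bas _).isOpen) (fun z hz => mem_iUnion.2 ⟨⟨z, hz⟩, hF1 _⟩)
    have hsub : OB (F '' r) ⊆ ⋃₀ (U '' r) := by
      intro f hf
      obtain ⟨_, ⟨z, hz, rfl⟩, h⟩ := mem_OB.1 hf
      exact ⟨_, ⟨z, hz, rfl⟩, hF2 z h⟩
    have hZO : Z ⊆ OB (F '' r) := by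
      intro z hz
      obtain ⟨w, hw, h⟩ := mem_iUnion₂.1 (hrc hz)
      exact mem_OB.2 ⟨_, ⟨w, hw, rfl⟩, h⟩
    refine ⟨U '' r, by rintro _ ⟨z, _, rfl⟩; exact hU1 z, hr.image _, hZO.trans hsub, ?_⟩
    obtain ⟨β, hβ⟩ := hC (F '' r) (hr.image _)
    refine (OmOne.cnt β).mono ?_
    intro α hα
    by_contra h
    apply hα
    apply hsub
    rw [← hβ]
    exact hx α β (not_le.1 h) (hβ ▸ hZO)
  · rintro x0 z ⟨⟨w, rfl⟩, hz⟩
    have : ∃ ε < γ, x0.1 ε ≠ w ε := by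
      by_contra h
      push Not at h
      exact hz ⟨x0, x0.2, prj_eq.2 h⟩
    obtain ⟨ε, hε, hne⟩ := this
    refine ⟨{x | x.1 ε ≠ w ε}, {f | f ε = w ε}, ?_, ?_, hne, prj_lt hε w, ?_⟩
    · exact (isOpen_discrete {b | b ≠ w ε}).preimage (f := fun x : X => x.1 ε)
        ((continuous_apply ε).comp continuous_subtype_val)
    · exact (isOpen_discrete {b | b = w ε}).preimage (f := fun x : I → Bool => x ε) (by fun_prop)
    · intro i h1 h2
      apply h1
      rw [mem_ofPred_eq, prj_lt hε] at h2
      exact h2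

/-- outside a Lindelof set, points are separated at some level -/
theorem sep_level (X : Set (I → Bool)) (hL : IsLindelof X) (w : I → Bool) (hw : w ∉ X) :
    ∃ γ0, ∀ γ ≥ γ0, ∀ x ∈ X, ∃ ε < γ, x ε ≠ w ε := by
  obtain ⟨r, hr, hrc⟩ := hL.elim_countable_subcover (fun ε : I => {x | x ε ≠ w ε})
    (fun ε => (isOpen_discrete {b | b ≠ w ε}).preimage (f := fun x : I → Bool => x ε) (continuous_apply ε)) (by
      intro x hx
      have : x ≠ w := by rintro rfl; exact hw hx
      obtain ⟨ε, h⟩ := Function.ne_iff.1 this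
      exact mem_iUnion.2 ⟨ε, h⟩)
  obtain ⟨γ, hγ⟩ := OmOne.bdd hr
  refine ⟨γ, fun γ' h' x hx => ?_⟩
  obtain ⟨ε, hε, h⟩ := mem_iUnion₂.1 (hrc hx)
  exact ⟨ε, (hγ ε hε).trans_le h', h⟩
end

section small
variable {J : Type u}

/-- countable-code closed sets satisfying sm -/
def DD (sm : Set (J → Bool) → Prop) (S : Set (J → Bool)) : Prop :=
  ∃ 𝒮 : Set (Finset (J × Bool)), 𝒮.Countable ∧ S ⊆ (OB 𝒮)ᶜ ∧ sm (OB 𝒮)ᶜ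

theorem OB_inter [DecidableEq J] (𝒮 𝒯 : Set (Finset (J × Bool))) :
    OB (image2 (· ∪ ·) 𝒮 𝒯) = OB 𝒮 ∩ OB 𝒯 := by
  ext f
  simp only [mem_OB, mem_inter_iff, mem_image2]
  constructor
  · rintro ⟨_, ⟨F, hF, G, hG, rfl⟩, h⟩
    rw [Bas_union] at h
    exact ⟨⟨F, hF, h.1⟩, G, hG, h.2⟩
  · rintro ⟨⟨F, hF, h1⟩, G, hG, h2⟩
    exact ⟨_, ⟨F, hF, G, hG, rfl⟩, by rw [Bas_union]; exact ⟨h1, h2⟩⟩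

/-- countably complete ideals -/
structure SmI (sm : Set (J → Bool) → Prop) : Prop where
  e : sm ∅
  m : ∀ S T, S ⊆ T → sm T → sm S
  U : ∀ 𝒜 : Set (Set (J → Bool)), 𝒜.Countable → (∀ A ∈ 𝒜, sm A) → sm (⋃₀ 𝒜)

variable {sm : Set (J → Bool) → Prop}

theorem DD_union (hsm : SmI sm) {S T : Set (J → Bool)} (hS : DD sm S) (hT : DD sm T) : DD sm (S ∪ T) := by
  classical
  obtain ⟨𝒮, h1, h2, h3⟩ := hS
  obtain ⟨𝒯, k1, k2, k3⟩ := hT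
  refine ⟨image2 (· ∪ ·) 𝒮 𝒯, h1.image2 k1 _, ?_, ?_⟩
  · rw [OB_inter, compl_inter]
    exact union_subset_union h2 k2
  · rw [OB_inter, compl_inter, ← sUnion_pair]
    refine hsm.U _ (by simp) ?_
    rintro A (rfl | rfl)
    · exact h3
    · exact k3

theorem DD_empty (hsm : SmI sm) : DD sm (∅ : Set (J → Bool)) := by
  refine ⟨{∅}, by simp, by simp, ?_⟩
  have : OB {(∅ : Finset (J × Bool))} = Set.univ := by
    ext f; simp [OB, Bas]
  rw [this, compl_univ]; exact hsm.e

theorem DD_claimA (hsm : SmI sm) {K : Set (J → Bool)} (hK : IsClosed K)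
    (h : DD sm (K \ ⋃ G ∈ {G : Finset (J × Bool) | DD sm (K ∩ Bas G)}, Bas G)) : DD sm K := by
  classical
  obtain ⟨𝒮, h1, h2, h3⟩ := h
  have hF : ∀ F ∈ 𝒮, DD sm (K ∩ Bas F) := by
    intro F hF
    have hc : IsCompact (K ∩ Bas F) := (hK.inter (isClopen_Bas F).isClosed).isCompact
    obtain ⟨t, ht⟩ := hc.elim_finite_subcover
      (fun G : {G : Finset (J × Bool) | DD sm (K ∩ Bas G)} => Bas G.1)
      (fun G => (isClopen_Bas _).isOpen) (by
        rintro f ⟨hf1, hf2⟩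
        by_contra h
        have := h2 ⟨hf1, by rw [biUnion_eq_iUnion]; exact h⟩
        exact this (mem_OB.2 ⟨F, hF, hf2⟩))
    have : ∀ t : Finset {G : Finset (J × Bool) | DD sm (K ∩ Bas G)},
        DD sm (⋃ G ∈ t, K ∩ Bas G.1) := by
      intro t
      induction t using Finset.induction_on with
      | empty => simpa using DD_empty hsm
      | insert a s _ ih =>
        rw [Finset.set_biUnion_insert]
        exact DD_union hsm a.2 ih
    obtain ⟨𝒯, k1, k2, k3⟩ := this t
    refine ⟨𝒯, k1, ?_, k3⟩
    intro f hf
    apply k2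
    obtain ⟨G, hG, h⟩ := mem_iUnion₂.1 (ht hf)
    exact mem_iUnion₂.2 ⟨G, hG, hf.1, h⟩
  choose! 𝒯 k1 k2 k3 using hF
  let 𝒬 : Set (Finset (J × Bool)) := ⋃ F ∈ 𝒮, image2 (· ∪ ·) {F} (𝒯 F)
  have hQ : ∀ f, f ∈ OB 𝒬 ↔ ∃ F ∈ 𝒮, f ∈ Bas F ∧ f ∈ OB (𝒯 F) := by
    intro f
    have : ∀ F, (f ∈ Bas F ∧ f ∈ OB (𝒯 F)) ↔ f ∈ OB (image2 (· ∪ ·) {F} (𝒯 F)) := by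
      intro F; rw [OB_inter, mem_inter_iff, mem_OB (𝒮 := {F})]; simp
    simp only [this]
    simp only [𝒬, mem_OB, mem_iUnion]
    constructor
    · rintro ⟨F, ⟨G, hG, h⟩, h'⟩
      exact ⟨G, hG, F, h, h'⟩
    · rintro ⟨G, hG, F, h, h'⟩
      exact ⟨F, ⟨G, hG, h⟩, h'⟩
  refine ⟨𝒬, h1.biUnion fun F hF => (countable_singleton F).image2 (k1 F hF) _, ?_, ?_⟩
  · intro f hf hfQ
    obtain ⟨F, hF, h4, h5⟩ := (hQ f).1 hfQ
    exact k2 F hF ⟨hf, h4⟩ h5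
  · refine hsm.m _ (⋃₀ (insert (OB 𝒮)ᶜ ((fun F => (OB (𝒯 F))ᶜ) '' 𝒮))) ?_ ?_
    · intro f hf
      by_cases hfS : f ∈ OB 𝒮
      · obtain ⟨F, hF, h⟩ := mem_OB.1 hfS
        refine ⟨_, mem_insert_of_mem _ ⟨F, hF, rfl⟩, ?_⟩
        intro h5
        exact hf ((hQ f).2 ⟨F, hF, h, h5⟩)
      · exact ⟨_, mem_insert _ _, hfS⟩
    · refine hsm.U _ ((h1.image _).insert _) ?_
      rintro A (rfl | ⟨F, hF, rfl⟩)
      · exact h3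
      · exact k3 F hF
end small


theorem baire_Bas {J : Type u} {P : Set (J → Bool)} (hP : IsCompact P) (hne : P.Nonempty)
    (𝓕 : Set (Set (J → Bool))) (hc : 𝓕.Countable) (hcl : ∀ F ∈ 𝓕, IsClosed F) (hcov : P ⊆ ⋃₀ 𝓕) :
    ∃ F ∈ 𝓕, ∃ G, (P ∩ Bas G).Nonempty ∧ P ∩ Bas G ⊆ F := by
  have : CompactSpace P := isCompact_iff_compactSpace.1 hP
  have : Nonempty P := hne.to_subtype
  have : Countable 𝓕 := hc
  obtain ⟨F, x, hx⟩ := nonempty_interior_of_iUnion_of_closed (X := P)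
    (f := fun F : 𝓕 => Subtype.val ⁻¹' F.1)
    (fun F => (hcl F F.2).preimage continuous_subtype_val) (by
      ext x
      obtain ⟨F, hF, h⟩ := hcov x.2
      simp only [mem_iUnion, mem_univ, iff_true]
      exact ⟨⟨F, hF⟩, h⟩)
  obtain ⟨O, hO, hO2⟩ := isOpen_induced_iff.1 (isOpen_interior (s := (Subtype.val ⁻¹' F.1 : Set P)))
  have hxO : x.1 ∈ O := by
    have : x ∈ (Subtype.val ⁻¹' O : Set P) := by rw [hO2]; exact hx
    exact this
  obtain ⟨G, h1, h2⟩ := exists_Bas hO hxO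
  refine ⟨F, F.2, G, ⟨x, x.2, h1⟩, ?_⟩
  rintro f ⟨hf, hG⟩
  have : (⟨f, hf⟩ : P) ∈ (Subtype.val ⁻¹' O : Set P) := h2 hG
  rw [hO2] at this
  exact (interior_subset this : _)

section
variable {I : Type u} [LinearOrder I]

def WW (sm : Set (I → Bool) → Prop) (C : I → Set (Finset (I × Bool))) (γ : I) : Set (I → Bool) :=
  {w | ∃ β < γ, sm (OB (C β))ᶜ ∧ w ∉ OB (C β)}

theorem WW_mono (sm : Set (I → Bool) → Prop) (C : I → Set (Finset (I × Bool))) {γ δ : I}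
    (h : γ ≤ δ) : WW sm C γ ⊆ WW sm C δ := by
  rintro w ⟨β, h1, h2⟩
  exact ⟨β, h1.trans_le h, h2⟩

variable [OmOne I]

theorem supp_countable (i : I) :
    {t : Finset (I × Bool) | ∀ j ∈ t.image Prod.fst, j ≤ i}.Countable := by
  refine (countable_finsets ((OmOne.cnt i).prod (countable_univ (α := Bool)))).mono ?_
  intro t ht a ha
  exact ⟨ht _ (Finset.mem_image_of_mem _ ha), trivial⟩

theorem lemmaK {sm : Set (I → Bool) → Prop} (hsm : SmI sm) {C : I → Set (Finset (I × Bool))}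
    (hCc : ∀ β, (C β).Countable)
    (X : Set (I → Bool)) (hX : ProductivelyLindelofSp X)
    (hcK : ∀ K ⊆ X, IsCompact K → DD sm K)
    (K : Set (I → Bool)) (hK : IsClosed K) (hKn : ¬ DD sm K) (δ : I) :
    ∃ γ, δ < γ ∧ ∃ w ∈ K, w ∉ WW sm C γ ∧ ∀ x ∈ X, ∃ ε < γ, x ε ≠ w ε := by
  classical
  have hL : IsLindelof X := isLindelof_iff_lindelofSpace.2 (pl_self hX).2
  by_contra hcon
  push Not at hcon
  let K' : Set (I → Bool) := K \ ⋃ G ∈ {G : Finset (I × Bool) | DD sm (K ∩ Bas G)}, Bas G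
  have hK' : IsClosed K' := hK.sdiff (isOpen_biUnion fun G _ => (isClopen_Bas G).isOpen)
  have hB : ∀ F, (K' ∩ Bas F).Nonempty → ¬ DD sm (K' ∩ Bas F) := by
    rintro F ⟨w, hw1, hw2⟩ hD
    have hDF : DD sm (K ∩ Bas F) := by
      apply DD_claimA hsm (hK.inter (isClopen_Bas F).isClosed)
      obtain ⟨𝒮, h1, h2, h3⟩ := hD
      refine ⟨𝒮, h1, ?_, h3⟩
      refine subset_trans ?_ h2
      rintro f ⟨⟨hf1, hf2⟩, hf3⟩
      refine ⟨⟨hf1, fun h => hf3 ?_⟩, hf2⟩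
      obtain ⟨G, ⟨𝒯, k1, k2, k3⟩, h⟩ := mem_iUnion₂.1 h
      refine mem_iUnion₂.2 ⟨G, ⟨𝒯, k1, subset_trans ?_ k2, k3⟩, h⟩
      rintro g ⟨⟨a, _⟩, b⟩
      exact ⟨a, b⟩
    exact hw1.2 (mem_iUnion₂.2 ⟨F, hDF, hw2⟩)
  have hne : K'.Nonempty := by
    rw [nonempty_iff_ne_empty]
    intro h
    apply hKn
    apply DD_claimA hsm hK
    change DD sm K'
    rw [h]; exact DD_empty hsm
  -- saturation
  let XS : I → Set (I → Bool) := fun γ => {w | ∃ x ∈ X, ∀ ε < γ, x ε = w ε}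
  have hb : ∀ F : Finset (I × Bool), (K' ∩ Bas F).Nonempty → ∃ γ, δ < γ ∧ ¬ (K' ∩ Bas F ⊆ XS γ) := by
    intro F hF
    by_contra h
    push Not at h
    apply hB F hF
    apply hcK _ _ ((hK'.inter (isClopen_Bas F).isClosed).isCompact)
    intro w hw
    by_contra hwX
    obtain ⟨γ0, h0⟩ := sep_level X hL w hwX
    obtain ⟨γ, hγ⟩ := OmOne.bdd (I := I) (S := {γ0, δ}) (by simp)
    obtain ⟨x, hx, h1⟩ := h γ (hγ δ (by simp)) hw
    obtain ⟨ε, hε, h2⟩ := h0 γ (hγ γ0 (by simp)).le x hx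
    exact h2 (h1 ε hε)
  have : Nonempty I := ⟨δ⟩
  choose! b hb1 hb2 using hb
  obtain ⟨g1, hg1⟩ := OmOne.exists_bd (fun F : Finset (I × Bool) => F.image Prod.fst) supp_countable b
  have hg2 : ∀ β, ∃ d : I, ∀ F ∈ C β, ∀ p ∈ F, p.1 < d := by
    intro β
    obtain ⟨d, hd⟩ := OmOne.bdd (S := ⋃ F ∈ C β, ((F.image Prod.fst : Finset I) : Set I))
      ((hCc β).biUnion fun F _ => Finset.countable_toSet _)
    refine ⟨d, fun F hF p hp => hd _ (mem_biUnion hF ?_)⟩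
    exact Finset.mem_coe.2 (Finset.mem_image_of_mem _ hp)
  choose g2 hg2 using hg2
  obtain ⟨γ, hδγ, hγ⟩ := OmOne.club (fun i => max (g1 i) (g2 i)) δ
  obtain ⟨𝓕, hFc, hFcl, hFu⟩ := michael X hX γ
  have hsup : ∀ β < γ, ∀ w, prj γ w ∈ OB (C β) ↔ w ∈ OB (C β) := by
    intro β hβ w
    have hs : ∀ F ∈ C β, ∀ p ∈ F, p.1 ∈ Iio γ := fun F hF p hp =>
      (hg2 β F hF p hp).trans ((le_max_right _ _).trans_lt (hγ β hβ))
    exact ⟨OB_supp hs (fun j hj => prj_lt hj w), OB_supp hs (fun j hj => (prj_lt hj w).symm)⟩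
  obtain ⟨A, hA, G, hG1, hG2⟩ := baire_Bas (P := prj γ '' K') (hK'.isCompact.image (prj_cont γ))
    (hne.image _) (𝓕 ∪ (fun β => (OB (C β))ᶜ) '' {β | β < γ ∧ sm (OB (C β))ᶜ})
    (hFc.union (((OmOne.cntI γ).mono fun β h => h.1).image _)) (by
      rintro F (hF | ⟨β, hβ, rfl⟩)
      · exact hFcl F hF
      · exact (isOpen_OB _).isClosed_compl) (by
      rintro _ ⟨w, hw, rfl⟩
      by_cases hwW : w ∈ WW sm C γ
      · obtain ⟨β, h1, h2, h3⟩ := hwW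
        refine ⟨_, Or.inr ⟨β, ⟨h1, h2⟩, rfl⟩, ?_⟩
        intro h
        exact h3 ((hsup β h1 w).1 h)
      · obtain ⟨x, hx, h1⟩ := hcon γ hδγ w hw.1 hwW
        have : prj γ w ∈ ⋃₀ 𝓕 := by
          rw [hFu]
          exact ⟨x, hx, prj_eq.2 h1⟩
        obtain ⟨F, hF, h⟩ := this
        exact ⟨F, Or.inl hF, h⟩)
  let G' := G.filter fun p => p.1 < γ
  obtain ⟨_, ⟨w0, hw0, rfl⟩, hw0G⟩ := hG1
  have hGG : ∀ w, w ∈ Bas G' → prj γ w ∈ Bas G := by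
    intro w hw p hp
    by_cases h : p.1 < γ
    · rw [prj_lt h]
      exact hw p (by simp [G', hp, h])
    · rw [prj_ge h, ← hw0G p hp, prj_ge h]
  have hne' : (K' ∩ Bas G').Nonempty := by
    refine ⟨w0, hw0, ?_⟩
    intro p hp
    obtain ⟨hp1, hp2⟩ := Finset.mem_filter.1 hp
    rw [← hw0G p hp1, prj_lt hp2]
  have hsubA : ∀ w ∈ K' ∩ Bas G', prj γ w ∈ A := fun w hw => hG2 ⟨⟨w, hw.1, rfl⟩, hGG w hw.2⟩
  rcases hA with hA | ⟨β, ⟨h1, h2⟩, rfl⟩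
  · obtain ⟨i, hi, hi2⟩ := OmOne.max_lt (G'.image Prod.fst) hδγ (by
      intro j hj
      obtain ⟨p, hp, rfl⟩ := Finset.mem_image.1 hj
      exact (Finset.mem_filter.1 hp).2)
    have hbγ : b G' < γ := (hg1 G' i hi2).trans ((le_max_left _ _).trans_lt (hγ i hi))
    apply hb2 G' hne'
    intro w hw
    have : prj γ w ∈ prj γ '' X := by rw [← hFu]; exact ⟨A, hA, hsubA w hw⟩
    obtain ⟨x, hx, h⟩ := this
    exact ⟨x, hx, fun ε hε => prj_eq.1 h ε (hε.trans hbγ)⟩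
  · apply hB G' hne'
    refine ⟨C β, hCc β, ?_, h2⟩
    intro w hw h
    exact hsubA w hw ((hsup β h1 w).2 h)
end


theorem DD_of_gdelta {J : Type u} {sm : Set (J → Bool) → Prop} (hsm : SmI sm)
    {K D : Set (J → Bool)} (hK : IsCompact K) (hKD : K ⊆ D) (hD : IsGδ D) (hs : sm D) : DD sm K := by
  obtain ⟨T, hT, hTc, rfl⟩ := hD
  have : ∀ t ∈ T, ∃ 𝒮 : Finset (Finset (J × Bool)), tᶜ ⊆ OB (𝒮 : Set (Finset (J × Bool))) ∧
      OB (𝒮 : Set (Finset (J × Bool))) ⊆ Kᶜ := by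
    intro t ht
    apply compact_Bas (hT t ht).isClosed_compl.isCompact hK.isClosed.isOpen_compl
    rw [compl_subset_compl]
    exact fun f hf => hKD hf t ht
  choose! 𝒮 h1 h2 using this
  refine ⟨⋃ t ∈ T, (𝒮 t : Set (Finset (J × Bool))), hTc.biUnion fun t _ => Finset.countable_toSet _,
    ?_, hsm.m _ _ ?_ hs⟩
  · intro f hf hO
    obtain ⟨F, hF, h⟩ := mem_OB.1 hO
    obtain ⟨t, ht, hF⟩ := mem_iUnion₂.1 hF
    exact h2 t ht (mem_OB.2 ⟨F, hF, h⟩) hf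
  · intro f hf t ht
    by_contra h
    apply hf
    obtain ⟨F, hF, h⟩ := mem_OB.1 (h1 t ht h)
    exact mem_OB.2 ⟨F, mem_iUnion₂.2 ⟨t, ht, hF⟩, h⟩

section
variable {I : Type u}

def Phi (m : I × I → Bool) (v : I → Bool) : I × I → Bool × Bool := fun p => (m p, m p && v p.2)

theorem Phi_cont_m (v : I → Bool) : Continuous fun m : I × I → Bool => Phi m v := by
  refine continuous_pi fun p => ?_
  exact (continuous_of_discreteTopology (f := fun b : Bool => (b, b && v p.2))).comp (continuous_apply p)

theorem Phi_cont_v (m : I × I → Bool) : Continuous fun v : I → Bool => Phi m v := by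
  refine continuous_pi fun p => ?_
  exact (continuous_of_discreteTopology (f := fun b : Bool => (m p, m p && b))).comp (continuous_apply p.2)

variable [LinearOrder I] 

def Pr (W : I → Set (I → Bool)) (CE : I → Set (Finset ((I × I) × (Bool × Bool)))) (γ β : I) : Prop :=
  β < γ ∧ (∀ F ∈ CE β, ∀ p ∈ F, p.1 ∈ Iio γ ×ˢ Iio γ) ∧
    ∀ v ∉ W γ, Dense {m | Phi m v ∈ OB (CE β)}

variable [OmOne I]

theorem supp2_countable (i : I) :
    {t : Finset ((I × I) × Bool) | ∀ j ∈ t.image (fun p => p.1.1) ∪ t.image (fun p => p.1.2), j ≤ i}.Countable := by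
  refine (countable_finsets (((OmOne.cnt i).prod (OmOne.cnt i)).prod (countable_univ (α := Bool)))).mono ?_
  intro t ht a ha
  exact ⟨⟨ht _ (Finset.mem_union_left _ (Finset.mem_image_of_mem _ ha)),
    ht _ (Finset.mem_union_right _ (Finset.mem_image_of_mem (fun p : (I × I) × Bool => p.1.2) ha))⟩, trivial⟩

theorem generic_mask (W : I → Set (I → Bool)) (CE : I → Set (Finset ((I × I) × (Bool × Bool)))) (γ : I)
    (v : I → Bool) (hv : v ∉ W γ) (T : Finset ((I × I) × Bool)) (hT : (Bas T).Nonempty) :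
    ∃ m ∈ Bas T, ∀ β, Pr W CE γ β → Phi m v ∈ OB (CE β) := by
  have hd : Dense (⋂ β ∈ {β | Pr W CE γ β}, {m | Phi m v ∈ OB (CE β)}) := by
    apply dense_biInter_of_isOpen
    · intro β _
      exact (isOpen_OB _).preimage (Phi_cont_m v)
    · exact (OmOne.cntI γ).mono fun β h => h.1
    · exact fun β h => h.2.2 v hv
  obtain ⟨m, h1, h2⟩ := hd.inter_open_nonempty _ (isClopen_Bas T).isOpen hT
  exact ⟨m, h1, fun β hβ => mem_iInter₂.1 h2 β hβ⟩

theorem bound2 (𝒮 : Set (Finset ((I × I) × (Bool × Bool)))) (h : 𝒮.Countable) (β : I) :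
    ∃ d : I, β < d ∧ ∀ F ∈ 𝒮, ∀ p ∈ F, p.1.1 < d ∧ p.1.2 < d := by
  classical
  obtain ⟨d, hd⟩ := OmOne.bdd
    (S := {β} ∪ ⋃ F ∈ 𝒮, ((F.image (fun p => p.1.1) ∪ F.image (fun p => p.1.2) : Finset I) : Set I))
    ((countable_singleton β).union (h.biUnion fun F _ => Finset.countable_toSet _))
  refine ⟨d, hd _ (Or.inl rfl), fun F hF p hp => ⟨hd _ (Or.inr (mem_biUnion hF ?_)), hd _ (Or.inr (mem_biUnion hF ?_))⟩⟩
  · exact Finset.mem_coe.2 (Finset.mem_union_left _ (Finset.mem_image_of_mem _ hp))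
  · exact Finset.mem_coe.2 (Finset.mem_union_right _
      (Finset.mem_image_of_mem (fun p : (I × I) × (Bool × Bool) => p.1.2) hp))

set_option maxHeartbeats 2000000 in
theorem alster (X : Set (I → Bool)) (hX : ProductivelyLindelofSp X)
    {sm : Set (I → Bool) → Prop} (hsm : SmI sm)
    (hcK0 : ∀ K ⊆ X, IsCompact K → ∃ D, K ⊆ D ∧ IsGδ D ∧ sm D) : sm X := by
  classical
  by_contra hsX
  have hcK : ∀ K ⊆ X, IsCompact K → DD sm K := by
    intro K hKX hK
    obtain ⟨D, h1, h2, h3⟩ := hcK0 K hKX hK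
    exact DD_of_gdelta hsm hK h1 h2 h3
  obtain ⟨C, hCc, hC⟩ := OmOne.enumOB (I := I) (J := I) (S := Bool) OmOne.card.le
  obtain ⟨CE, hCEc, hCE⟩ := OmOne.enumOB (I := I) (J := I × I) (S := Bool × Bool) (by
    rw [Cardinal.mk_prod, OmOne.card]; simp)
  let W := WW sm C
  have hsW : ∀ γ, sm (W γ) := by
    intro γ
    refine hsm.m _ (⋃₀ ((fun β => (OB (C β))ᶜ) '' {β | β < γ ∧ sm (OB (C β))ᶜ})) ?_ ?_
    · rintro w ⟨β, h1, h2, h3⟩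
      exact ⟨_, ⟨β, ⟨h1, h2⟩, rfl⟩, h3⟩
    · refine hsm.U _ (((OmOne.cntI γ).mono fun β h => h.1).image _) ?_
      rintro _ ⟨β, h, rfl⟩
      exact h.2
  have hx : ∀ α, ∃ x : X, x.1 ∉ W α := by
    intro α
    by_contra h
    push Not at h
    exact hsX (hsm.m _ _ (fun x hx => h ⟨x, hx⟩) (hsW α))
  choose x hx using hx
  have hm : ∀ α, ∃ m, ∀ β, Pr W CE α β → Phi m (x α).1 ∈ OB (CE β) := by
    intro α
    obtain ⟨m, _, h⟩ := generic_mask W CE α (x α).1 (hx α) ∅ ⟨fun _ => false, by simp [Bas]⟩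
    exact ⟨m, h⟩
  choose M hM using hm
  let Zl : I → Set (I × I → Bool × Bool) := fun γ => {z | ∃ m w, z = Phi m w ∧
    (∀ x ∈ X, ∃ ε < γ, x ε ≠ w ε) ∧ w ∉ W γ ∧ (∀ ε < γ, m (γ, ε) = true) ∧
    (∀ p, p ∉ Iic γ ×ˢ Iic γ → m p = false) ∧ ∀ β, Pr W CE γ β → z ∈ OB (CE β)}
  have := OmOne.unc (I := I)
  refine machine (I := I) hX (⋃ γ, Zl γ) x (fun α => Phi (M α) (x α).1) ?_ ?_
  · intro 𝒰 hU hc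
    have hsmall : ∀ T : Finset ((I × I) × Bool), (Bas T).Nonempty →
        DD sm {v | ∀ m ∈ Bas T, Phi m v ∉ ⋃₀ 𝒰} := by
      intro T hT
      by_contra hn
      have hcl : IsClosed {v | ∀ m ∈ Bas T, Phi m v ∉ ⋃₀ 𝒰} := by
        have : {v | ∀ m ∈ Bas T, Phi m v ∉ ⋃₀ 𝒰} =
            ⋂ m ∈ Bas T, ((fun v => Phi m v) ⁻¹' (⋃₀ 𝒰))ᶜ := by ext; simp
        rw [this]
        exact isClosed_biInter fun m _ => ((isOpen_sUnion hU).preimage (Phi_cont_v m)).isClosed_compl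
      obtain ⟨δ, hδ⟩ := OmOne.bdd
        (S := ((T.image (fun p => p.1.1) ∪ T.image (fun p => p.1.2) : Finset I) : Set I))
        (Finset.countable_toSet _)
      have hδ' : ∀ p ∈ T, p.1.1 < δ ∧ p.1.2 < δ := fun p hp =>
        ⟨hδ _ (Finset.mem_coe.2 (Finset.mem_union_left _ (Finset.mem_image_of_mem _ hp))),
         hδ _ (Finset.mem_coe.2 (Finset.mem_union_right _
           (Finset.mem_image_of_mem (fun p : (I × I) × Bool => p.1.2) hp)))⟩
      obtain ⟨γ, hγ, w, hwK, hwW, hwX⟩ := lemmaK hsm hCc X hX hcK _ hcl hn δ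
      obtain ⟨m, hmT, hm⟩ := generic_mask W CE γ w hwW T hT
      let m' : I × I → Bool := fun p =>
        if p ∈ Iio γ ×ˢ Iio γ then m p else decide (p.1 = γ ∧ p.2 < γ)
      have hm'1 : ∀ p ∈ Iio γ ×ˢ Iio γ, m' p = m p := fun p hp => by simp only [m', if_pos hp]
      have hm'T : m' ∈ Bas T := by
        intro p hp
        rw [hm'1 p.1 ⟨(hδ' p hp).1.trans hγ, (hδ' p hp).2.trans hγ⟩]
        exact hmT p hp
      have hz : Phi m' w ∈ Zl γ := by
        refine ⟨m', w, rfl, hwX, hwW, ?_, ?_, ?_⟩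
        · intro ε hε
          have : (γ, ε) ∉ Iio γ ×ˢ Iio γ := fun h => lt_irrefl _ h.1
          simp only [m', if_neg this]
          simp [hε]
        · intro p hp
          have h1 : p ∉ Iio γ ×ˢ Iio γ := fun h => hp ⟨le_of_lt h.1, le_of_lt h.2⟩
          simp only [m', if_neg h1]
          simp only [decide_eq_false_iff_not]
          rintro ⟨h2, h3⟩
          exact hp ⟨h2.le, h3.le⟩
        · intro β hβ
          refine OB_supp hβ.2.1 ?_ (hm β hβ)
          intro p hp
          simp only [Phi, hm'1 p hp]
      exact hwK m' hm'T (hc (mem_iUnion.2 ⟨γ, hz⟩))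
    have hST : ∀ T : Finset ((I × I) × Bool), (Bas T).Nonempty →
        ∃ 𝒮 : Set (Finset ((I × I) × (Bool × Bool))), ∃ β d : I, 𝒮.Countable ∧
          (∀ F ∈ 𝒮, ∃ U ∈ 𝒰, Bas F ⊆ U) ∧ sm (OB (C β))ᶜ ∧
          (∀ v ∈ OB (C β), ∃ m ∈ Bas T, Phi m v ∈ OB 𝒮) ∧ β < d ∧
          ∀ F ∈ 𝒮, ∀ p ∈ F, p.1.1 < d ∧ p.1.2 < d := by
      intro T hT
      obtain ⟨𝒯, h1, h2, h3⟩ := hsmall T hT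
      obtain ⟨β, rfl⟩ := hC 𝒯 h1
      have h4 : ∀ v : OB (C β), ∃ m ∈ Bas T, ∃ U ∈ 𝒰, ∃ F, Phi m v ∈ Bas F ∧ Bas F ⊆ U := by
        intro v
        by_contra h
        push Not at h
        refine h2 (a := v.1) ?_ v.2
        rintro m hm ⟨U, hU', h5⟩
        obtain ⟨F, h6, h7⟩ := exists_Bas (hU U hU') h5
        exact h m hm U hU' F h6 h7
      choose m hm U hU' F hF1 hF2 using h4
      have hL : IsLindelof (OB (C β)) :=
        (hCc β).isLindelof_biUnion fun F _ => (isClopen_Bas F).isClosed.isCompact.isLindelof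
      obtain ⟨r, hr, hrc⟩ := hL.elim_countable_subcover
        (fun v : OB (C β) => (fun v' => Phi (m v) v') ⁻¹' Bas (F v))
        (fun v => (isClopen_Bas _).isOpen.preimage (Phi_cont_v _))
        (fun v hv => mem_iUnion.2 ⟨⟨v, hv⟩, hF1 _⟩)
      obtain ⟨d, hd1, hd2⟩ := bound2 (F '' r) (hr.image _) β
      refine ⟨F '' r, β, d, hr.image _, ?_, h3, ?_, hd1, hd2⟩
      · rintro _ ⟨v, _, rfl⟩
        exact ⟨U v, hU' v, hF2 v⟩
      · intro v hv
        obtain ⟨v', hv', h⟩ := mem_iUnion₂.1 (hrc hv)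
        exact ⟨m v', hm v', mem_OB.2 ⟨_, ⟨v', hv', rfl⟩, h⟩⟩
    have : Nonempty I := inferInstance
    choose! 𝒮 b d hS1 hS2 hS3 hS4 hS5 hS6 using hST
    obtain ⟨g, hg⟩ := OmOne.exists_bd (fun t : Finset ((I × I) × Bool) =>
      t.image (fun p => p.1.1) ∪ t.image (fun p => p.1.2)) (fun i => by
        refine (supp2_countable i).mono ?_
        intro t ht j hj
        simp only [Finset.mem_union, Finset.mem_image] at hj
        refine ht j ?_
        simp only [Finset.mem_union, Finset.mem_image]
        exact hj) d
    obtain ⟨δ0⟩ := this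
    obtain ⟨δ, hδ0, hδ⟩ := OmOne.club g δ0
    have hdδ : ∀ T : Finset ((I × I) × Bool), (∀ p ∈ T, p.1 ∈ Iio δ ×ˢ Iio δ) → d T < δ := by
      intro T hT
      obtain ⟨i, hi, hi2⟩ := OmOne.max_lt (T.image (fun p => p.1.1) ∪ T.image (fun p => p.1.2)) hδ0 (by
        intro j hj
        rcases Finset.mem_union.1 hj with hj | hj
        · obtain ⟨p, hp, rfl⟩ := Finset.mem_image.1 hj
          exact (hT p hp).1
        · obtain ⟨p, hp, rfl⟩ := Finset.mem_image.1 hj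
          exact (hT p hp).2)
      exact (hg T i hi2).trans (hδ i hi)
    let TT : Set (Finset ((I × I) × Bool)) := {T | (Bas T).Nonempty ∧ ∀ p ∈ T, p.1 ∈ Iio δ ×ˢ Iio δ}
    have hTT : TT.Countable := by
      refine (countable_finsets (((OmOne.cntI δ).prod (OmOne.cntI δ)).prod (countable_univ (α := Bool)))).mono ?_
      intro t ht a ha
      exact ⟨ht.2 a ha, trivial⟩
    let 𝒬 : Set (Finset ((I × I) × (Bool × Bool))) := ⋃ T ∈ TT, 𝒮 T
    have hQc : 𝒬.Countable := hTT.biUnion fun T hT => hS1 T hT.1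
    have hQs : ∀ F ∈ 𝒬, ∀ p ∈ F, p.1 ∈ Iio δ ×ˢ Iio δ := by
      intro F hF p hp
      obtain ⟨T, hT, hF⟩ := mem_iUnion₂.1 hF
      have h1 := hS6 T hT.1 F hF p hp
      have h2 := hdδ T hT.2
      exact ⟨h1.1.trans h2, h1.2.trans h2⟩
    have hQU : ∀ F ∈ 𝒬, ∃ U ∈ 𝒰, Bas F ⊆ U := by
      intro F hF
      obtain ⟨T, hT, hF⟩ := mem_iUnion₂.1 hF
      exact hS2 T hT.1 F hF
    choose! UQ hUQ1 hUQ2 using hQU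
    have hdense : ∀ v ∉ W δ, Dense {m | Phi m v ∈ OB 𝒬} := by
      intro v hv
      rw [dense_iff_inter_open]
      rintro O hO ⟨m0, hm0⟩
      obtain ⟨T', hT1, hT2⟩ := exists_Bas hO hm0
      let T := T'.filter fun p => p.1 ∈ Iio δ ×ˢ Iio δ
      have hT : T ∈ TT := ⟨⟨m0, fun p hp => hT1 p (Finset.mem_filter.1 hp).1⟩,
        fun p hp => (Finset.mem_filter.1 hp).2⟩
      have hvb : v ∈ OB (C (b T)) := by
        by_contra h
        exact hv ⟨b T, (hS5 T hT.1).trans (hdδ T hT.2), hS3 T hT.1, h⟩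
      obtain ⟨m, hm1, hm2⟩ := hS4 T hT.1 v hvb
      let m' : I × I → Bool := fun p => if p ∈ Iio δ ×ˢ Iio δ then m p else m0 p
      refine ⟨m', hT2 ?_, ?_⟩
      · intro p hp
        by_cases h : p.1 ∈ Iio δ ×ˢ Iio δ
        · simp only [m', if_pos h]
          exact hm1 p (Finset.mem_filter.2 ⟨hp, h⟩)
        · simp only [m', if_neg h]
          exact hT1 p hp
      · have h1 : Phi m v ∈ OB 𝒬 := by
          obtain ⟨F, hF, h⟩ := mem_OB.1 hm2
          exact mem_OB.2 ⟨F, mem_iUnion₂.2 ⟨T, hT, hF⟩, h⟩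
        refine OB_supp hQs ?_ h1
        intro p hp
        simp only [Phi, m', if_pos hp]
    obtain ⟨β0, hβ0⟩ := hCE 𝒬 hQc
    have hPr : ∀ γ, max β0 δ < γ → Pr W CE γ β0 := by
      intro γ hγ
      have h1 : β0 < γ := (le_max_left _ _).trans_lt hγ
      have h2 : δ < γ := (le_max_right _ _).trans_lt hγ
      refine ⟨h1, ?_, ?_⟩
      · rw [hβ0]
        intro F hF p hp
        have := hQs F hF p hp
        exact ⟨lt_trans this.1 h2, lt_trans this.2 h2⟩
      · intro v hv
        rw [hβ0]
        exact hdense v fun h => hv (WW_mono sm C h2.le h)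
    have hlow : IsLindelof (⋃ γ ∈ Iic (max β0 δ), Zl γ) := by
      refine lind_supp ((OmOne.cnt (max β0 δ)).prod (OmOne.cnt (max β0 δ))) (false, false) _ ?_
      intro f hf p hp
      obtain ⟨γ, hγ, m, w, rfl, _, _, _, h, _⟩ := mem_iUnion₂.1 hf
      have : m p = false := h p fun hp' => hp ⟨le_trans hp'.1 hγ, le_trans hp'.2 hγ⟩
      simp [Phi, this]
    obtain ⟨𝒱, hV1, hV2, hV3⟩ := lind_sub hlow 𝒰 hU (subset_trans
      (iUnion₂_subset fun γ _ => subset_iUnion Zl γ) hc)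
    have hQV : OB 𝒬 ⊆ ⋃₀ (𝒱 ∪ UQ '' 𝒬) := by
      intro f hf
      obtain ⟨F, hF, h⟩ := mem_OB.1 hf
      exact ⟨UQ F, Or.inr ⟨F, hF, rfl⟩, hUQ2 F hF h⟩
    refine ⟨𝒱 ∪ UQ '' 𝒬, union_subset hV1 (by rintro _ ⟨F, hF, rfl⟩; exact hUQ1 F hF),
      hV2.union (hQc.image _), ?_, ?_⟩
    · intro z hz
      obtain ⟨γ, hz⟩ := mem_iUnion.1 hz
      rcases le_or_gt γ (max β0 δ) with h | h
      · obtain ⟨U, hU', h'⟩ := hV3 (mem_iUnion₂.2 ⟨γ, h, hz⟩)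
        exact ⟨U, Or.inl hU', h'⟩
      · obtain ⟨m, w, _, _, _, _, _, h2⟩ := hz
        apply hQV
        rw [← hβ0]
        exact h2 β0 (hPr γ h)
    · refine (OmOne.cnt (max β0 δ)).mono ?_
      intro α hα
      by_contra h
      apply hα
      apply hQV
      rw [← hβ0]
      exact hM α β0 (hPr α (not_le.1 h))
  · intro x0 z hz
    obtain ⟨γ, m, w, rfl, h1, _, h2, _⟩ := mem_iUnion.1 hz
    obtain ⟨ε, hε, hne⟩ := h1 x0 x0.2
    refine ⟨{x | x.1 ε ≠ w ε}, {e | e (γ, ε) = (true, w ε)}, ?_, ?_, hne, ?_, ?_⟩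
    · exact (isOpen_discrete {b | b ≠ w ε}).preimage (f := fun x : X => x.1 ε)
        ((continuous_apply ε).comp continuous_subtype_val)
    · exact (isOpen_discrete {b | b = (true, w ε)}).preimage
        (f := fun e : I × I → Bool × Bool => e (γ, ε)) (by fun_prop)
    · simp [Phi, h2 ε hε]
    · intro i h3 h4
      apply h3
      simp only [Phi, mem_ofPred_eq, Prod.mk.injEq] at h4
      rw [h4.1] at h4
      simpa using h4.2
end


theorem box_nhd {C : Type u} [TopologicalSpace C] [CompactSpace C] [T2Space C] (s : ℕ → Set C)
    (hs : ∀ i, IsCompact (s i)) (O : Set (ℕ → C)) (hO : IsOpen O) (hsO : ∀ f, (∀ i, f i ∈ s i) → f ∈ O) :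
    ∃ N : ℕ, ∃ G : ℕ → Set C, (∀ i, IsOpen (G i) ∧ s i ⊆ G i) ∧ ∀ f, (∀ i < N, f i ∈ G i) → f ∈ O := by
  have h1 : ∀ f : (Oᶜ : Set (ℕ → C)), ∃ i, ∃ V U : Set C, IsOpen V ∧ IsOpen U ∧ f.1 i ∈ V ∧ s i ⊆ U ∧ Disjoint V U := by
    intro f
    have : ∃ i, f.1 i ∉ s i := by
      by_contra h
      push Not at h
      exact f.2 (hsO f.1 h)
    obtain ⟨i, hi⟩ := this
    obtain ⟨V, U, h1, h2, h3, h4, h5⟩ := SeparatedNhds.of_isCompact_isCompact (isCompact_singleton (x := f.1 i)) (hs i) (disjoint_singleton_left.2 hi)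
    exact ⟨i, V, U, h1, h2, h3 rfl, h4, h5⟩
  choose i V U hV hU hfV hsU hd using h1
  obtain ⟨t, ht⟩ := hO.isClosed_compl.isCompact.elim_finite_subcover
    (fun f : (Oᶜ : Set (ℕ → C)) => (fun g : ℕ → C => g (i f)) ⁻¹' V f)
    (fun f => (hV f).preimage (continuous_apply _)) (fun f hf => mem_iUnion.2 ⟨⟨f, hf⟩, hfV _⟩)
  refine ⟨t.sup i + 1, fun j => ⋂ f ∈ t, {c | i f = j → c ∈ U f}, ?_, ?_⟩
  · intro j
    refine ⟨isOpen_biInter_finset fun f _ => ?_, ?_⟩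
    · by_cases h : i f = j
      · simpa [h] using hU f
      · simp [h]
    · intro c hc
      simp only [mem_iInter]
      rintro f _ rfl
      exact hsU f hc
  · intro f hf
    by_contra hfO
    obtain ⟨k, hk, h⟩ := mem_iUnion₂.1 (ht hfO)
    have h2 := hf (i k) (Nat.lt_succ_of_le (Finset.le_sup hk))
    have h3 := mem_iInter₂.1 h2 k hk rfl
    exact (disjoint_left.1 (hd k) h) h3

theorem power_lind {I : Type u} [LinearOrder I] [OmOne I] (X : Set (I → Bool))
    (hX : ProductivelyLindelofSp X) : LindelofSpace (ℕ → X) := by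
  classical
  rw [← quasi_iff]
  intro 𝒰 hU hc
  by_contra hng
  let good : Set (ℕ → X) → Prop := fun S => ∃ 𝒱 ⊆ 𝒰, 𝒱.Countable ∧ S ⊆ ⋃₀ 𝒱
  let P : ℕ → (ℕ → Set (I → Bool)) → Prop := fun n s => ∀ G : ℕ → Set (I → Bool),
    (∀ i < n, IsGδ (G i) ∧ s i ⊆ G i) → ¬ good {f | ∀ i < n, (f i).1 ∈ G i}
  have step : ∀ n s, P n s → ∃ K, IsCompact K ∧ K ⊆ X ∧ ∀ s', (∀ i < n, s' i = s i) → s' n = K → P (n+1) s' := by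
    intro n s hP
    let sm : Set (I → Bool) → Prop := fun S => ∃ G : ℕ → Set (I → Bool),
      (∀ i < n, IsGδ (G i) ∧ s i ⊆ G i) ∧ good {f | (∀ i < n, (f i).1 ∈ G i) ∧ (f n).1 ∈ S}
    have hsm : SmI sm := by
      refine ⟨⟨fun _ => Set.univ, fun i _ => ⟨IsGδ.univ, subset_univ _⟩, ∅, by simp, by simp, by simp⟩, ?_, ?_⟩
      · rintro S T hST ⟨G, h1, 𝒱, h2, h3, h4⟩
        exact ⟨G, h1, 𝒱, h2, h3, fun f hf => h4 ⟨hf.1, hST hf.2⟩⟩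
      · intro 𝒜 hA hs
        choose! G h1 𝒱 h2 h3 h4 using hs
        refine ⟨fun i => ⋂ A ∈ 𝒜, G A i, fun i hi => ⟨IsGδ.biInter hA fun A hA' => (h1 A hA' i hi).1,
          subset_iInter₂ fun A hA' => (h1 A hA' i hi).2⟩, ⋃ A ∈ 𝒜, 𝒱 A, iUnion₂_subset h2, hA.biUnion h3, ?_⟩
        rintro f ⟨hf1, A, hA', hf2⟩
        obtain ⟨U, hU', h⟩ := h4 A hA' ⟨fun i hi => mem_iInter₂.1 (hf1 i hi) A hA', hf2⟩
        exact ⟨U, mem_iUnion₂.2 ⟨A, hA', hU'⟩, h⟩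
    by_contra hcon
    push Not at hcon
    have : sm X := by
      apply alster X hX hsm
      intro K hKX hK
      obtain ⟨s', hs1, hs2, hs3⟩ := hcon K hK hKX
      simp only [P] at hs3
      push Not at hs3
      obtain ⟨G, hG1, hG2⟩ := hs3
      refine ⟨G n, ?_, (hG1 n (Nat.lt_succ_self n)).1, G, ?_, ?_⟩
      · rw [← hs2]; exact (hG1 n (Nat.lt_succ_self n)).2
      · intro i hi
        rw [← hs1 i hi]
        exact hG1 i (hi.trans (Nat.lt_succ_self n))
      · obtain ⟨𝒱, h2, h3, h4⟩ := hG2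
        refine ⟨𝒱, h2, h3, fun f hf => h4 ?_⟩
        intro i hi
        rcases Nat.lt_succ_iff_lt_or_eq.1 hi with h | rfl
        · exact hf.1 i h
        · exact hf.2
    obtain ⟨G, hG, 𝒱, h2, h3, h4⟩ := this
    exact hP G hG ⟨𝒱, h2, h3, fun f hf => h4 ⟨hf, (f n).2⟩⟩
  choose! k hk1 hk2 hk3 using step
  let t : ℕ → ℕ → Set (I → Bool) := fun n => Nat.rec (fun _ => ∅) (fun n s => Function.update s n (k n s)) n
  have ht : ∀ n, t (n+1) = Function.update (t n) n (k n (t n)) := fun n => rfl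
  have hPt : ∀ n, P n (t n) := by
    intro n
    induction n with
    | zero =>
      rintro G _ ⟨𝒱, h1, h2, h3⟩
      refine hng ⟨𝒱, h1, h2, ?_⟩
      rw [eq_univ_iff_forall]
      intro f
      exact h3 (by intro i hi; exact absurd hi (Nat.not_lt_zero i))
    | succ n ih =>
      refine hk3 n (t n) ih _ ?_ ?_
      · intro i hi
        rw [ht, Function.update_of_ne hi.ne]
      · rw [ht, Function.update_self]
  let s : ℕ → Set (I → Bool) := fun i => t (i+1) i
  have hs : ∀ n, ∀ i < n, t n i = s i := by
    intro n
    induction n with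
    | zero => intro i hi; exact absurd hi (Nat.not_lt_zero i)
    | succ n ih =>
      intro i hi
      rcases Nat.lt_succ_iff_lt_or_eq.1 hi with h | rfl
      · rw [ht, Function.update_of_ne h.ne, ih i h]
      · rfl
  have hsk : ∀ n, s n = k n (t n) := fun n => by simp only [s, ht, Function.update_self]
  have hsc : ∀ n, IsCompact (s n) := fun n => by rw [hsk]; exact hk1 n _ (hPt n)
  have hsX : ∀ n, s n ⊆ X := fun n => by rw [hsk]; exact hk2 n _ (hPt n)
  -- compact product
  have hQc : IsCompact (Set.pi Set.univ fun i => (Subtype.val ⁻¹' s i : Set X)) := by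
    refine isCompact_univ_pi fun i => ?_
    rw [Subtype.isCompact_iff, Subtype.image_preimage_coe, inter_eq_right.2 (hsX i)]
    exact hsc i
  obtain ⟨r, hr⟩ := hQc.elim_finite_subcover (fun U : 𝒰 => U.1) (fun U => hU U U.2)
    (by rw [← sUnion_eq_iUnion, hc]; exact subset_univ _)
  have hemb : IsInducing (fun f : ℕ → X => fun i => (f i).1) := by
    exact IsInducing.piMap (fun _ => IsInducing.subtypeVal)
  obtain ⟨O, hO, hO2⟩ := hemb.isOpen_iff.1 (isOpen_biUnion fun (U : 𝒰) (_ : U ∈ r) => hU U U.2)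
  obtain ⟨N, G, hG1, hG2⟩ := box_nhd s hsc O hO (by
    intro f hf
    have : (fun i => (⟨f i, hsX i (hf i)⟩ : X)) ∈ (fun f : ℕ → X => fun i => (f i).1) ⁻¹' O := by
      rw [hO2]
      exact hr (fun i _ => hf i)
    exact this)
  refine hPt N G (fun i hi => ⟨(hG1 i).1.isGδ, by rw [hs N i hi]; exact (hG1 i).2⟩) ?_
  refine ⟨Subtype.val '' (r : Set 𝒰), by rintro _ ⟨U, _, rfl⟩; exact U.2, (Finset.countable_toSet r).image _, ?_⟩
  intro f hf
  have : f ∈ (fun f : ℕ → X => fun i => (f i).1) ⁻¹' O := hG2 _ hf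
  rw [hO2] at this
  obtain ⟨U, hU', h⟩ := mem_iUnion₂.1 this
  exact ⟨U.1, ⟨U, hU', rfl⟩, h⟩


theorem closure_op {A X : Type u} (hA : #A ≤ Cardinal.continuum.{u}) (G : A → (ℕ → X) → X) (x0 : X) :
    ∃ Y : Set X, x0 ∈ Y ∧ #Y ≤ Cardinal.continuum.{u} ∧ ∀ a ys, (∀ n, ys n ∈ Y) → G a ys ∈ Y := by
  let β : Option A → Type := fun o => match o with
    | none => PEmpty
    | some _ => ℕ
  let f : (Σ o, (β o → X)) → X := fun p => match p with
    | ⟨none, _⟩ => x0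
    | ⟨some a, ys⟩ => G a ys
  let ev : WType β → X := WType.elim X f
  have hcard : #(WType β) ≤ Cardinal.continuum.{u} := by
    apply WType.cardinalMk_le_of_le'
    have h1 : ∀ o : Option A, Cardinal.continuum.{u} ^ Cardinal.lift.{u} #(β o) ≤ Cardinal.continuum.{u} := by
      intro o
      have : #(β o) ≤ Cardinal.aleph0 := by
        cases o with
        | none => exact Cardinal.mk_le_aleph0 (α := PEmpty)
        | some a => exact Cardinal.mk_le_aleph0 (α := ℕ)
      calc _ ≤ Cardinal.continuum.{u} ^ Cardinal.aleph0.{u} :=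
            Cardinal.power_le_power_left Cardinal.continuum_ne_zero (by simpa using this)
        _ = _ := Cardinal.continuum_power_aleph0
    refine (Cardinal.sum_le_sum _ _ h1).trans ?_
    rw [Cardinal.sum_const', Cardinal.mk_option]
    refine (mul_le_mul' (?_ : _ ≤ Cardinal.continuum.{u}) le_rfl).trans_eq Cardinal.continuum_mul_self
    refine le_trans ?_ Cardinal.continuum_add_self.le
    exact add_le_add hA (Cardinal.one_le_aleph0.trans Cardinal.aleph0_le_continuum)
  refine ⟨range ev, ⟨WType.mk none PEmpty.elim, rfl⟩, Cardinal.mk_range_le.trans hcard, ?_⟩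
  intro a ys hys
  choose t ht using hys
  refine ⟨WType.mk (some a) t, ?_⟩
  change G a (fun n => ev (t n)) = _
  simp only [ht]

section
variable {I : Type u} [LinearOrder I] [OmOne I]

theorem zerodim_red {X : Type u} [TopologicalSpace X] (hX : ProductivelyLindelofSp X) (U : I → Set X)
    (hUo : ∀ i, IsOpen (U i)) (hUb : ∀ x W, IsOpen W → x ∈ W → ∃ i, x ∈ U i ∧ U i ⊆ W) :
    LindelofSpace (ℕ → X) := by
  classical
  have hT3 := (pl_self hX).1
  let Rel : X → (I → Bool) → Prop := fun x c =>
    ∀ i, (c i = true → x ∈ closure (U i)) ∧ (c i = false → x ∉ U i)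
  have hreg : ∀ x W, IsOpen W → x ∈ W → ∃ i, x ∈ U i ∧ closure (U i) ⊆ W := by
    intro x W hW hx
    obtain ⟨V, hV1, hV2, hV3⟩ := exists_mem_nhds_isClosed_subset (hW.mem_nhds hx)
    obtain ⟨i, h1, h2⟩ := hUb x (interior V) isOpen_interior (mem_interior_iff_mem_nhds.2 hV1)
    exact ⟨i, h1, (closure_minimal (h2.trans interior_subset) hV2).trans hV3⟩
  have htrue : ∀ x c, Rel x c → ∀ i, x ∈ U i → c i = true := by
    intro x c h i hx
    by_contra hc
    exact (h i).2 (by simpa using hc) hx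
  have huniq : ∀ x y c, Rel x c → Rel y c → x = y := by
    intro x y c hx hy
    by_contra hne
    obtain ⟨i, h1, h2⟩ := hreg x {y}ᶜ isOpen_compl_singleton hne
    exact h2 ((hy i).1 (htrue x c hx i h1)) rfl
  let X0 : Set (I → Bool) := {c | ∃ x, Rel x c}
  have hX0 : ProductivelyLindelofSp X0 := by
    apply pl_mk
    intro Y _ _ hY
    have h1 : LindelofSpace ((I → Bool) × Y) := compact_prod_lind
    have h2 := pl_prod hX h1
    let M : Set (X × ((I → Bool) × Y)) := {p | Rel p.1 p.2.1}
    have hM : IsClosed M := by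
      have : M = ⋂ i, (({p | p.2.1 i = false} ∪ {p | p.1 ∈ closure (U i)}) ∩
          ({p | p.2.1 i = true} ∪ {p | p.1 ∈ (U i)ᶜ})) := by
        ext p
        simp only [M, Rel, mem_ofPred_eq, mem_iInter, mem_inter_iff, mem_union, mem_compl_iff]
        refine forall_congr' fun i => ?_
        cases p.2.1 i <;> simp
      rw [this]
      have hb : ∀ i (b : Bool), IsClosed {p : X × ((I → Bool) × Y) | p.2.1 i = b} := fun i b =>
        (isClosed_discrete {b}).preimage (f := fun p : X × ((I → Bool) × Y) => p.2.1 i) (by fun_prop)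
      refine isClosed_iInter fun i => (((hb i _).union ?_).inter ((hb i _).union ?_))
      · exact isClosed_closure.preimage continuous_fst
      · exact (hUo i).isClosed_compl.preimage continuous_fst
    have h3 : LindelofSpace M := isLindelof_iff_lindelofSpace.1 (hM.isLindelof)
    let φ : M → X0 × Y := fun p => (⟨p.1.2.1, p.1.1, p.2⟩, p.1.2.2)
    have hφ : Continuous φ := by
      refine Continuous.prodMk (Continuous.subtype_mk ?_ _) ?_ <;> fun_prop
    refine LindelofSpace.of_continuous_surjective hφ ?_
    rintro ⟨⟨c, x, hx⟩, y⟩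
    exact ⟨⟨(x, c, y), hx⟩, rfl⟩
  have hL := power_lind X0 hX0
  choose φ hφ using fun c : X0 => c.2
  have hφc : Continuous φ := by
    rw [continuous_iff_continuousAt]
    intro c
    rw [ContinuousAt, tendsto_nhds]
    intro W hW hx
    obtain ⟨i, h1, h2⟩ := hreg _ W hW hx
    have ho : IsOpen {c : X0 | c.1 i = true} :=
      (isOpen_discrete {true}).preimage (f := fun c : X0 => c.1 i)
        ((continuous_apply i).comp continuous_subtype_val)
    refine Filter.mem_of_superset (ho.mem_nhds (htrue _ _ (hφ c) i h1)) ?_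
    intro c' hc'
    exact h2 ((hφ c' i).1 hc')
  have hφs : Function.Surjective φ := by
    intro x
    have hx : Rel x (fun i => decide (x ∈ U i)) := by
      intro i
      simp only [decide_eq_true_eq, decide_eq_false_iff_not]
      exact ⟨fun h => subset_closure h, fun h => h⟩
    exact ⟨⟨_, x, hx⟩, huniq _ _ _ (hφ ⟨_, x, hx⟩) hx⟩
  exact LindelofSpace.of_continuous_surjective (f := fun (g : ℕ → X0) i => φ (g i))
    (by fun_prop) (fun g => by
      choose h hh using fun i => hφs (g i)
      exact ⟨h, funext hh⟩)

end

theorem main_lind (I : Type u) [LinearOrder I] [OmOne I] {X : Type u} [TopologicalSpace X] (hX : ProductivelyLindelofSp X)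
    (B : Set (Set X)) (hB : TopologicalSpace.IsTopologicalBasis B)
    (hBp : PointLE B Cardinal.continuum) : LindelofSpace (ℕ → X) := by
  classical
  rcases isEmpty_or_nonempty X with hemp | ⟨⟨x0⟩⟩
  · infer_instance
  rw [← quasi_iff]
  intro 𝒰 hU hc
  have he : ∀ y : X, ∃ e : I → Set X, ∀ b, (b ∈ B ∧ y ∈ b) ↔ ∃ i, e i = b := by
    intro y
    obtain ⟨b, hb, hyb, _⟩ := hB.exists_subset_of_mem_open (mem_univ y) isOpen_univ
    have : Nonempty {W ∈ B | y ∈ W} := ⟨⟨b, hb, hyb⟩⟩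
    obtain ⟨f, hf⟩ := OmOne.enum (I := I) (hBp y)
    refine ⟨fun i => (f i).1, fun b => ⟨fun h => ?_, ?_⟩⟩
    · obtain ⟨i, hi⟩ := hf ⟨b, h⟩
      exact ⟨i, congrArg Subtype.val hi⟩
    · rintro ⟨i, rfl⟩
      exact (f i).2
  choose e he using he
  let Cd : ℕ → (ℕ → Set X) → Set (ℕ → X) := fun N b => {f | ∀ i < N, f i ∈ b i}
  let A := (ℕ → ℕ) × (ℕ → ℕ → I) × ℕ
  have hA : #A ≤ Cardinal.continuum.{u} := by
    have h1 : #(ℕ → ℕ → I) ≤ Cardinal.continuum.{u} := mk_seq_le (mk_seq_le OmOne.card.le)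
    simp only [A, Cardinal.mk_prod, Cardinal.lift_id, Cardinal.lift_mul]
    have h2 : Cardinal.lift.{u} #(ℕ → ℕ) = Cardinal.continuum.{u} := by simp
    rw [h2]
    refine le_trans ?_ Cardinal.continuum_mul_self.le
    refine mul_le_mul' le_rfl ?_
    refine le_trans ?_ Cardinal.continuum_mul_self.le
    refine mul_le_mul' (by simpa using h1) ?_
    simpa using Cardinal.aleph0_le_continuum
  let Q : (ℕ → ℕ) → (ℕ → ℕ → I) → (ℕ → X) → Prop := fun N r ys =>
    ∃ f : ℕ → X, ∀ k, f ∉ Cd (N k) (fun i => e (ys (Nat.pair k i)) (r k i))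
  let G : A → (ℕ → X) → X := fun a ys =>
    if h : Q a.1 a.2.1 ys then h.choose a.2.2 else x0
  obtain ⟨Y, hx0, hYc, hYG⟩ := closure_op hA G x0
  let Z := closure Y
  have hZ : ProductivelyLindelofSp Z := pl_closed hX Z isClosed_closure
  have hmeet : ∀ z ∈ Z, ∀ b ∈ B, z ∈ b → ∃ y ∈ Y, ∃ i, e y i = b := by
    intro z hz b hb hzb
    obtain ⟨y, h1, h2⟩ := mem_closure_iff.1 hz b (hB.isOpen hb) hzb
    exact ⟨y, h2, (he y b).1 ⟨hb, h1⟩⟩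
  have hL : LindelofSpace (ℕ → Z) := by
    have hYI : #(Y × I) ≤ Cardinal.continuum.{u} := by
      rw [Cardinal.mk_prod]
      refine le_trans ?_ Cardinal.continuum_mul_self.le
      exact mul_le_mul' (by simpa using hYc) (by simpa using (OmOne.card (I := I)).le)
    have := OmOne.unc (I := I)
    have : Nonempty (Y × I) := ⟨(⟨x0, hx0⟩, Classical.arbitrary I)⟩
    obtain ⟨q, hq⟩ := OmOne.enum (I := I) hYI
    refine zerodim_red hZ (fun i => Subtype.val ⁻¹' (e (q i).1 (q i).2)) ?_ ?_
    · intro i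
      exact (hB.isOpen ((he (q i).1 _).2 ⟨_, rfl⟩).1).preimage continuous_subtype_val
    · intro z W hW hz
      obtain ⟨W', hW', rfl⟩ := isOpen_induced_iff.1 hW
      obtain ⟨b, hb, hzb, hbW⟩ := hB.exists_subset_of_mem_open hz hW'
      obtain ⟨y, hy, i, rfl⟩ := hmeet z z.2 b hb hzb
      obtain ⟨j, hj⟩ := hq (⟨y, hy⟩, i)
      refine ⟨j, ?_, ?_⟩
      · simp only [hj]; exact hzb
      · simp only [hj]; exact preimage_mono hbW
  have h1 : ∀ g : ℕ → Z, ∃ U ∈ 𝒰, ∃ N : ℕ, ∃ y : ℕ → X, ∃ r : ℕ → I, (∀ i, y i ∈ Y) ∧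
      (fun i => (g i).1) ∈ Cd N (fun i => e (y i) (r i)) ∧ Cd N (fun i => e (y i) (r i)) ⊆ U := by
    intro g
    have : (fun i => (g i).1) ∈ ⋃₀ 𝒰 := by rw [hc]; trivial
    obtain ⟨U, hU', hg⟩ := this
    obtain ⟨F, w, hw, hs⟩ := isOpen_pi_iff.1 (hU U hU') _ hg
    have h2 : ∀ i, ∃ y ∈ Y, ∃ r, (g i).1 ∈ e y r ∧ (i ∈ F → e y r ⊆ w i) := by
      intro i
      by_cases hi : i ∈ F
      · obtain ⟨b, hb, hzb, hbW⟩ := hB.exists_subset_of_mem_open (hw i hi).2 (hw i hi).1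
        obtain ⟨y, hy, r, rfl⟩ := hmeet _ (g i).2 b hb hzb
        exact ⟨y, hy, r, hzb, fun _ => hbW⟩
      · obtain ⟨b, hb, hzb, _⟩ := hB.exists_subset_of_mem_open (mem_univ (g i).1) isOpen_univ
        obtain ⟨y, hy, r, rfl⟩ := hmeet _ (g i).2 b hb hzb
        exact ⟨y, hy, r, hzb, fun h => absurd h hi⟩
    choose y hy r hr1 hr2 using h2
    refine ⟨U, hU', F.sup id + 1, y, r, hy, fun i _ => hr1 i, fun f hf => hs fun i hi => hr2 i hi (hf i ?_)⟩
    exact Nat.lt_succ_of_le (Finset.le_sup (f := id) hi)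
  choose U hU1 N y r hy hg hsub using h1
  have hCdo : ∀ g : ℕ → Z, IsOpen ((fun (g' : ℕ → Z) i => (g' i).1) ⁻¹' Cd (N g) (fun i => e (y g i) (r g i))) := by
    intro g
    refine IsOpen.preimage (by fun_prop) ?_
    have : Cd (N g) (fun i => e (y g i) (r g i)) =
        Set.pi (Iio (N g)) (fun i => e (y g i) (r g i)) := by ext; simp [Cd, Set.mem_pi]
    rw [this]
    exact isOpen_set_pi (finite_Iio _) fun i _ => hB.isOpen ((he (y g i) _).2 ⟨_, rfl⟩).1
  obtain ⟨s, hs, hsc⟩ := isLindelof_univ.elim_countable_subcover _ hCdo (fun g _ => mem_iUnion.2 ⟨g, hg g⟩)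
  have hsne : s.Nonempty := by
    obtain ⟨g, hg, _⟩ := mem_iUnion₂.1 (hsc (mem_univ (fun _ => (⟨x0, subset_closure hx0⟩ : Z))))
    exact ⟨g, hg⟩
  obtain ⟨g, rfl⟩ := hs.exists_eq_range hsne
  refine ⟨range fun k => U (g k), by rintro _ ⟨k, rfl⟩; exact hU1 _, countable_range _, ?_⟩
  rw [eq_univ_iff_forall]
  intro f
  by_contra hf
  let ys : ℕ → X := fun m => y (g m.unpair.1) m.unpair.2
  have hys : ∀ k i, ys (Nat.pair k i) = y (g k) i := by intro k i; simp [ys]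
  have hQ : Q (fun k => N (g k)) (fun k => r (g k)) ys := by
    refine ⟨f, fun k hk => hf ⟨_, ⟨k, rfl⟩, hsub (g k) ?_⟩⟩
    simp only [hys] at hk
    exact hk
  have hch : ∀ n, hQ.choose n ∈ Y := by
    intro n
    have := hYG (fun k => N (g k), fun k => r (g k), n) ys (fun m => hy _ _)
    simp only [G, dif_pos hQ] at this
    exact this
  obtain ⟨_, ⟨k, rfl⟩, hk⟩ := mem_iUnion₂.1 (hsc (mem_univ (fun i => (⟨hQ.choose i, subset_closure (hch i)⟩ : Z))))
  have := hQ.choose_spec k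
  refine this fun i hi => ?_
  change _ ∈ e (ys (Nat.pair k i)) _
  rw [hys k i]
  exact hk i hi

theorem stmt15 (hCH : Cardinal.continuum = Cardinal.aleph 1)
    (X : Type u) [TopologicalSpace X]
    (hprod : ProductivelyLindelofSp X)
    (hbase : ∃ B : Set (Set X), TopologicalSpace.IsTopologicalBasis B ∧
      PointLE B Cardinal.continuum) :
    PowerfullyLindelofSp X := by
  obtain ⟨I, _, _⟩ := OmOne.exists.{u} hCH
  obtain ⟨B, hB, hBp⟩ := hbase
  have := (pl_self hprod).1
  exact eng_mk (main_lind I hprod B hB hBp)
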